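/- arXiv:2510.16649 — 6 statements merged into one kernel-verified Lean document; each statement's English description precedes it below -/
import Mathlib

section
/- Let f be an irreducible homogeneous polynomial of degree d ≥ 1 in m ≥ 3 variables with integer coefficients, defining the hypersurface C_f. Then G(C_f) divides G(H_f). -/
/-!
Let `h` be a corner of the support of `f`, and let `v` have positive entries and make `h · v` the
strict maximum of `i · v` over the support. For `q ∈ ℚ^m` consider the curve
`t ↦ (t ^ v_j + q_j)_j`. Restricting `f` to it gives a polynomial `F ∈ ℚ[t]` of degree exactly
`h · v` (`natDegree_curve`). If the curve meets the affine cone `f = 0` only in nonzero smooth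
points, then every root `t` of `F` yields a projective point whose field of definition lies in
`ℚ(t)`, so `G(C)` divides `[ℚ(t) : ℚ]` (`dvd_of_point`), and summing over the irreducible factors
of `F` gives `G(C) ∣ h · v` (`dvd_natDegree`, `dvd_weight`).

A suitable `q` exists because the singular locus of the cone has codimension at least two
(`exists_curve`). Concretely, fix `w` with `f(w) ≠ 0`. The polynomial `f(X + s w)` is irreducible in
`ℚ[X][s]`, of positive degree in `s`, so by Gauss's lemma and characteristic zero it is separable
over `ℚ(X)`: some nonzero `D(X)` is a combination of `f(X + s w)` and its `s`-derivative
(`bezout`, `exists_good_poly`). Take `p` with `D(p) ≠ 0`. Then `D(p + t ^ v)` vanishes for finitely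
many `t` only, and for each of these only finitely many `s` satisfy `f(p + t ^ v + s w) = 0`
(`finite_bad`); any rational `s` avoiding all of them gives `q = p + s w`.

Finally, for a corner with witness `v`, both `(d + 1)(v + 1)` and `(d + 1)(v + 1) + e_k` are
admissible weights, and the difference of the corresponding divisibilities is `G(C) ∣ h_k`.
-/

open MvPolynomial

noncomputable section

/-- A fixed algebraic closure of `ℚ`. -/
abbrev Qbar : Type := AlgebraicClosure ℚ

/-- `K` admits a new non-singular point of the hypersurface `f = 0`:
a tuple of `K`-rational values, not all zero, on which `f` vanishes, some partial derivative
of `f` does not vanish, and such that after rescaling some nonzero coordinate to `1`,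
the coordinates generate `K` over `ℚ`. -/
def IsNewPoint {m : ℕ} (f : MvPolynomial (Fin m) ℚ) (K : IntermediateField ℚ Qbar) : Prop :=
  ∃ a : Fin m → Qbar, (∀ j, a j ∈ K) ∧ a ≠ 0 ∧
    MvPolynomial.aeval a f = 0 ∧
    (∃ j, MvPolynomial.aeval a (MvPolynomial.pderiv j f) ≠ 0) ∧
    (∃ i, a i ≠ 0 ∧ IntermediateField.adjoin ℚ (Set.range fun j => a j / a i) = K)

/-- `D(C)`: degrees of number fields admitting a new non-singular point of `C : f = 0`. -/
def DSet {m : ℕ} (f : MvPolynomial (Fin m) ℚ) : Set ℕ :=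
  {n | 0 < n ∧ ∃ K : IntermediateField ℚ Qbar,
    FiniteDimensional ℚ ↥K ∧ Module.finrank ℚ ↥K = n ∧ IsNewPoint f K}

/-- `D(C)^inf`: degrees `n` such that infinitely many number fields of degree `n`
admit a new non-singular point of `C : f = 0`. -/
def DinfSet {m : ℕ} (f : MvPolynomial (Fin m) ℚ) : Set ℕ :=
  {n | 0 < n ∧ {K : IntermediateField ℚ Qbar |
    FiniteDimensional ℚ ↥K ∧ Module.finrank ℚ ↥K = n ∧ IsNewPoint f K}.Infinite}

/-- `g` is the greatest common divisor of the set `S` of naturals. -/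
def IsGcdOf (g : ℕ) (S : Set ℕ) : Prop :=
  (∀ n ∈ S, g ∣ n) ∧ ∀ k : ℕ, (∀ n ∈ S, k ∣ n) → k ∣ g

/-- `h` is a corner of the support of `f`: there is `v ∈ ℤ_{≥0}^m` with
`h·v > i·v` for all other `i` in the support. -/
def IsNewtonCorner {m : ℕ} (f : MvPolynomial (Fin m) ℤ) (h : Fin m →₀ ℕ) : Prop :=
  h ∈ f.support ∧ ∃ v : Fin m → ℕ, ∀ i ∈ f.support, i ≠ h →
    (∑ j, i j * v j) < (∑ j, h j * v j)

/-! ### Separability of the generic line section -/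

/-- An irreducible polynomial of positive degree over a GCD domain `R` of characteristic zero is
separable over the fraction field (Gauss's lemma); clearing denominators in the Bézout relation
with its derivative leaves a nonzero constant `D ∈ R`. -/
theorem bezout {R : Type*} [CommRing R] [IsDomain R] [IsGCDMonoid R] [CharZero R]
    {P : Polynomial R} (hP : Irreducible P) (hdeg : P.natDegree ≠ 0) :
    ∃ (D : R) (U V : Polynomial R), D ≠ 0 ∧
      U * P + V * Polynomial.derivative P = Polynomial.C D := by
  have hirr : Irreducible (P.map (algebraMap R (FractionRing R))) :=
    ((hP.isPrimitive hdeg).irreducible_iff_irreducible_map_fraction_map).1 hP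
  have : CharZero (FractionRing R) :=
    charZero_of_injective_algebraMap (IsFractionRing.injective R (FractionRing R))
  obtain ⟨a, b, hab⟩ := hirr.separable
  obtain ⟨c, hc, hc'⟩ := IsLocalization.integerNormalization_spec (nonZeroDivisors R) a
  obtain ⟨e, he, he'⟩ := IsLocalization.integerNormalization_spec (nonZeroDivisors R) b
  set a' := IsLocalization.integerNormalization (nonZeroDivisors R) a
  set b' := IsLocalization.integerNormalization (nonZeroDivisors R) b
  refine ⟨c * e, Polynomial.C e * a', Polynomial.C c * b',
    mul_ne_zero (nonZeroDivisors.ne_zero hc) (nonZeroDivisors.ne_zero he), ?_⟩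
  apply Polynomial.map_injective _ (IsFractionRing.injective R (FractionRing R))
  rw [Algebra.smul_def, Polynomial.algebraMap_apply] at hc' he'
  rw [Polynomial.map_add, Polynomial.map_mul, Polynomial.map_mul, Polynomial.map_mul,
    Polynomial.map_mul, hc', he', ← Polynomial.derivative_map]
  simp only [Polynomial.map_C, map_mul, Polynomial.map_mul]
  linear_combination (Polynomial.C (algebraMap R (FractionRing R) c) *
    Polynomial.C (algebraMap R (FractionRing R) e)) * hab

/-- The substitution `f ↦ f(X + s w)`, with values in `ℚ[X][s]`: the outer polynomial variable is
`s`, the coefficients are polynomials in `X_1, …, X_m`. -/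
def shift {m : ℕ} (w : Fin m → ℚ) :
    MvPolynomial (Fin m) ℚ →ₐ[ℚ] Polynomial (MvPolynomial (Fin m) ℚ) :=
  aeval fun i => Polynomial.C (X i) + Polynomial.C (C (w i)) * Polynomial.X

/-- The substitution `X ↦ X + s w`, `s ↦ s` is an automorphism of `ℚ[X][s]` with inverse
`X ↦ X - s w`, so it preserves irreducibility of the constant polynomial `f`. -/
theorem shift_irreducible {m : ℕ} (w : Fin m → ℚ) {f : MvPolynomial (Fin m) ℚ}
    (hf : Irreducible f) : Irreducible (shift w f) := by
  let Φ (u : Fin m → ℚ) := Polynomial.eval₂RingHom (shift u).toRingHom Polynomial.X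
  have hΦ : ∀ u, (Φ (-u)).comp (Φ u) = RingHom.id _ := by
    intro u
    apply Polynomial.ringHom_ext'
    · apply MvPolynomial.ringHom_ext'
      · exact Subsingleton.elim _ _
      · intro i
        simp [Φ, shift, MvPolynomial.algebraMap_eq]
        ring
    · simp [Φ]
  let e : Polynomial (MvPolynomial (Fin m) ℚ) ≃+* Polynomial (MvPolynomial (Fin m) ℚ) :=
    RingEquiv.ofRingHom (Φ w) (Φ (-w)) (by simpa using hΦ (-w)) (hΦ w)
  have he : e (Polynomial.C f) = shift w f := by simp [e, Φ]
  rw [← he, MulEquiv.irreducible_iff e]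
  exact (Polynomial.prime_C_iff.2 hf.prime).irreducible


/-- The chain rule along a polynomial curve `g`. -/
theorem derivative_aeval {m : ℕ} {S : Type*} [CommRing S] [Algebra ℚ S]
    (g : Fin m → Polynomial S) (f : MvPolynomial (Fin m) ℚ) :
    Polynomial.derivative (aeval g f) =
      ∑ j, aeval g (pderiv j f) * Polynomial.derivative (g j) := by
  induction f using MvPolynomial.induction_on with
  | C a => simp only [aeval_C, pderiv_C, map_zero, zero_mul, Finset.sum_const_zero,
      Polynomial.algebraMap_apply, Polynomial.derivative_C]
  | add p q hp hq => simp [hp, hq, add_mul, Finset.sum_add_distrib]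
  | mul_X p i hp =>
    have key : ∀ j, aeval g (pderiv j (p * X i)) * Polynomial.derivative (g j) =
        aeval g (pderiv j p) * Polynomial.derivative (g j) * g i +
          if j = i then aeval g p * Polynomial.derivative (g i) else 0 := by
      intro j
      rw [pderiv_mul, pderiv_X]
      split_ifs with h
      · subst h
        simp
        ring
      · simp [Ne.symm h]
        ring
    rw [Finset.sum_congr rfl fun j _ => key j, Finset.sum_add_distrib, ← Finset.sum_mul, ← hp]
    simp [Polynomial.derivative_mul]

theorem sum_of_mem_support {m d : ℕ} {R : Type*} [CommSemiring R] {f : MvPolynomial (Fin m) R}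
    (hf : f.IsHomogeneous d) {i : Fin m →₀ ℕ} (hi : i ∈ f.support) : ∑ j, i j = d := by
  have := hf (mem_support_iff.1 hi)
  simpa [Finsupp.weight_apply, Finsupp.sum_fintype] using this

theorem aeval_smul_of_homogeneous {m d : ℕ} {S : Type*} [CommRing S] [Algebra ℚ S]
    {f : MvPolynomial (Fin m) ℚ} (hf : f.IsHomogeneous d) (c : S) (x : Fin m → S) :
    aeval (fun j => c * x j) f = c ^ d * aeval x f := by
  rw [aeval_def, aeval_def, eval₂_eq', eval₂_eq', Finset.mul_sum]
  refine Finset.sum_congr rfl fun i hi => ?_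
  simp only [mul_pow, Finset.prod_mul_distrib]
  rw [Finset.prod_pow_eq_pow_sum, sum_of_mem_support hf hi]
  ring

theorem aeval_ratCast {m : ℕ} (p : Fin m → ℚ) (f : MvPolynomial (Fin m) ℚ) :
    aeval (fun j => (p j : Qbar)) f = algebraMap ℚ Qbar (eval p f) := by
  have := aeval_algebraMap_apply Qbar p f
  rw [aeval_eq_eval] at this
  simpa [Function.comp_def] using this

theorem eval_shift {m : ℕ} (w : Fin m → ℚ) (x : Fin m → Qbar) (s : Qbar)
    (f : MvPolynomial (Fin m) ℚ) :
    Polynomial.eval₂ (aeval x : MvPolynomial (Fin m) ℚ →ₐ[ℚ] Qbar).toRingHom s (shift w f) =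
      aeval (fun j => x j + s * (w j : Qbar)) f := by
  have : (Polynomial.eval₂RingHom (aeval x : MvPolynomial (Fin m) ℚ →ₐ[ℚ] Qbar).toRingHom s).comp
      (shift w).toRingHom =
      (aeval (fun j => x j + s * (w j : Qbar)) : MvPolynomial (Fin m) ℚ →ₐ[ℚ] Qbar).toRingHom := by
    apply MvPolynomial.ringHom_ext'
    · exact Subsingleton.elim _ _
    · intro i
      simp [shift]
      ring
  exact DFunLike.congr_fun this f

/-- If `f(w) ≠ 0`, there is a nonzero `D` such that lines in direction `w` through a point `x` with
`D(x) ≠ 0` meet the cone `f = 0` only in nonzero smooth points. -/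
theorem exists_good_poly {m d : ℕ} (hm : 3 ≤ m) (hd : 1 ≤ d) {f : MvPolynomial (Fin m) ℚ}
    (hf : f.IsHomogeneous d) (hirr : Irreducible f) {w : Fin m → ℚ} (hw : eval w f ≠ 0) :
    ∃ D : MvPolynomial (Fin m) ℚ, D ≠ 0 ∧ ∀ (x : Fin m → Qbar) (s : Qbar), aeval x D ≠ 0 →
      aeval (fun j => x j + s * (w j : Qbar)) f = 0 →
      (fun j => x j + s * (w j : Qbar)) ≠ 0 ∧
      ∃ j, aeval (fun j => x j + s * (w j : Qbar)) (pderiv j f) ≠ 0 := by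
  have h0 : aeval (0 : Fin m → ℚ) f = 0 := by
    have := aeval_smul_of_homogeneous hf (0 : ℚ) (0 : Fin m → ℚ)
    rw [zero_pow (by omega), zero_mul] at this
    simpa [Pi.zero_def] using this
  have hw0 : w ≠ 0 := by
    rintro rfl
    exact hw (by simpa [coe_aeval_eq_eval] using h0)
  -- Otherwise `f(X + s w)` does not depend on `s`, and `X = 0`, `s = 0, 1` give `f(w) = f(0) = 0`.
  have hdeg : (shift w f).natDegree ≠ 0 := by
    intro h
    obtain ⟨c, hc⟩ := Polynomial.natDegree_eq_zero.1 h
    have h1 := eval_shift w 0 1 f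
    have h2 := eval_shift w 0 0 f
    rw [← hc, Polynomial.eval₂_C] at h1 h2
    rw [h1] at h2
    simp only [Pi.zero_apply, zero_add, one_mul, zero_mul] at h2
    have e1 : aeval (fun j => (w j : Qbar)) f = algebraMap ℚ Qbar (eval w f) := aeval_ratCast w f
    have e2 : aeval (fun _ => (0 : Qbar)) f = 0 := by
      have := aeval_algebraMap_apply Qbar (0 : Fin m → ℚ) f
      rw [h0] at this
      simpa [Function.comp_def] using this
    rw [e1, e2] at h2
    exact hw (by simpa using h2)
  obtain ⟨D, U, V, hD, hUV⟩ := bezout (shift_irreducible w hirr) hdeg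
  -- The form `w_i X_k - w_k X_i` is invariant under `X ↦ X + s w`; as a factor of the discriminating
  -- polynomial it keeps the line away from the origin, which for `d = 1` is a smooth point of the
  -- cone and so is not excluded by `D`.
  obtain ⟨i, hi⟩ := Function.ne_iff.1 hw0
  obtain ⟨k, hk⟩ : ∃ k : Fin m, k ≠ i := by
    have : Nontrivial (Fin m) := Fin.nontrivial_iff_two_le.2 (by omega)
    exact exists_ne i
  have hE : (C (w i) * X k - C (w k) * X i : MvPolynomial (Fin m) ℚ) ≠ 0 := by
    intro h
    have := congrArg (eval (Pi.single k (1 : ℚ))) h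
    simp [hk.symm] at this
    exact hi this
  refine ⟨D * (C (w i) * X k - C (w k) * X i), mul_ne_zero hD hE, ?_⟩
  intro x s hx hfx
  rw [map_mul] at hx
  constructor
  · intro hz
    apply right_ne_zero_of_mul hx
    have hzi := congrFun hz i
    have hzk := congrFun hz k
    simp only [Pi.zero_apply] at hzi hzk
    simp only [map_sub, map_mul, aeval_X, aeval_C, eq_ratCast]
    linear_combination (w i : Qbar) * hzk - (w k : Qbar) * hzi
  · by_contra! hall
    apply left_ne_zero_of_mul hx
    have := congrArg (Polynomial.eval₂
      (aeval x : MvPolynomial (Fin m) ℚ →ₐ[ℚ] Qbar).toRingHom s) hUV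
    have hder : Polynomial.eval₂ (aeval x : MvPolynomial (Fin m) ℚ →ₐ[ℚ] Qbar).toRingHom s
        (Polynomial.derivative (shift w f)) = 0 := by
      unfold shift
      rw [derivative_aeval, Polynomial.eval₂_finsetSum]
      refine Finset.sum_eq_zero fun j _ => ?_
      rw [Polynomial.eval₂_mul]
      have := eval_shift w x s (pderiv j f)
      rw [hall j] at this
      unfold shift at this
      rw [this, zero_mul]
    rw [Polynomial.eval₂_add, Polynomial.eval₂_mul, Polynomial.eval₂_mul, hder, eval_shift, hfx,
      Polynomial.eval₂_C] at this
    simpa using this.symm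

/-- If `f(w) ≠ 0`, only finitely many rational `s` put `x + s w` on the cone `f = 0`. -/
theorem finite_bad {m d : ℕ} {f : MvPolynomial (Fin m) ℚ}
    (hf : f.IsHomogeneous d) {w : Fin m → ℚ} (hw : eval w f ≠ 0) (x : Fin m → Qbar) :
    {s : ℚ | aeval (fun j => x j + (s : Qbar) * (w j : Qbar)) f = 0}.Finite := by
  -- By homogeneity a root `s ≠ 0` of `f(x + s w)` corresponds to the root `s⁻¹` of
  -- `r(u) = f(u x + w)`, and `r(0) = f(w) ≠ 0`.
  let r : Polynomial Qbar :=
    aeval (fun j => Polynomial.C (x j) * Polynomial.X + Polynomial.C (w j : Qbar)) f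
  have hr : ∀ u : Qbar, r.eval u = aeval (fun j => x j * u + (w j : Qbar)) f := by
    intro u
    have := comp_aeval_apply (R := ℚ)
      (fun j => Polynomial.C (x j) * Polynomial.X + Polynomial.C (w j : Qbar))
      ((Polynomial.aeval u : Polynomial Qbar →ₐ[Qbar] Qbar).restrictScalars ℚ) f
    simpa [r] using this
  have hr0 : r ≠ 0 := by
    intro h
    have := hr 0
    have e1 : aeval (fun j => (w j : Qbar)) f = algebraMap ℚ Qbar (eval w f) := aeval_ratCast w f
    simp only [h, Polynomial.eval_zero, mul_zero, zero_add, e1] at this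
    exact hw (by simpa using this.symm)
  have hfin : ({u : Qbar | r.IsRoot u}).Finite := Polynomial.finite_setOfPred_isRoot hr0
  have hinj : Function.Injective fun s : ℚ => ((s : Qbar))⁻¹ := fun a b h => by
    simpa using h
  refine ((Set.finite_singleton (0 : ℚ)).union (hfin.preimage hinj.injOn)).subset ?_
  intro s hs
  by_cases h : s = 0
  · left; exact h
  · right
    have h' : (s : Qbar) ≠ 0 := by exact_mod_cast h
    have e : aeval (fun j => (s : Qbar)⁻¹ * (x j + (s : Qbar) * (w j : Qbar))) f = 0 := by
      rw [Set.mem_ofPred_eq] at hs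
      rw [aeval_smul_of_homogeneous hf, hs, mul_zero]
    change r.eval _ = 0
    rw [hr, ← e]
    congr 2
    funext j
    field_simp

/-! ### A curve meeting the cone in smooth points -/

/-- Some translate of the monomial curve `t ↦ (t ^ v_j)_j` by a rational vector meets the cone
`f = 0` only in nonzero smooth points. -/
theorem exists_curve {m d : ℕ} (hm : 3 ≤ m) (hd : 1 ≤ d) {f : MvPolynomial (Fin m) ℚ}
    (hf : f.IsHomogeneous d) (hirr : Irreducible f) {v : Fin m → ℕ} (hv : ∀ j, v j ≠ 0) :
    ∃ q : Fin m → ℚ, ∀ t : Qbar, aeval (fun j => t ^ v j + (q j : Qbar)) f = 0 →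
      (fun j => t ^ v j + (q j : Qbar)) ≠ 0 ∧
      ∃ j, aeval (fun j => t ^ v j + (q j : Qbar)) (pderiv j f) ≠ 0 := by
  have hex : ∀ g : MvPolynomial (Fin m) ℚ, g ≠ 0 → ∃ x, eval x g ≠ 0 := by
    intro g hg
    by_contra! h
    exact hg (MvPolynomial.funext fun x => by simpa using h x)
  obtain ⟨w, hw⟩ := hex f hirr.ne_zero
  obtain ⟨D, hD0, hD⟩ := exists_good_poly hm hd hf hirr hw
  obtain ⟨p, hp⟩ := hex D hD0
  let E : Polynomial ℚ := aeval (fun j => Polynomial.X ^ v j + Polynomial.C (p j)) D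
  have hE : ∀ t : Qbar, Polynomial.aeval t E = aeval (fun j => t ^ v j + (p j : Qbar)) D := by
    intro t
    have := comp_aeval_apply (R := ℚ) (fun j => Polynomial.X ^ v j + Polynomial.C (p j))
      (Polynomial.aeval t : Polynomial ℚ →ₐ[ℚ] Qbar) D
    simpa [E] using this
  have hE0 : E ≠ 0 := by
    intro h
    have := hE 0
    have e1 : aeval (fun j => (p j : Qbar)) D = algebraMap ℚ Qbar (eval p D) := aeval_ratCast p D
    simp only [h, map_zero, zero_pow (hv _), zero_add, e1] at this
    exact hp (by simpa using this.symm)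
  have hfin : (⋃ t ∈ E.rootSet Qbar, {s : ℚ | aeval (fun j => (t ^ v j + (p j : Qbar)) +
      (s : Qbar) * (w j : Qbar)) f = 0}).Finite :=
    (E.rootSet_finite Qbar).biUnion fun t _ => finite_bad hf hw _
  obtain ⟨s, hs⟩ := hfin.exists_notMem
  refine ⟨fun j => p j + s * w j, fun t ht => ?_⟩
  have e : (fun j => t ^ v j + ((p j + s * w j : ℚ) : Qbar)) =
      fun j => (t ^ v j + (p j : Qbar)) + (s : Qbar) * (w j : Qbar) := by
    funext j
    push_cast
    ring
  rw [e] at ht ⊢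
  refine hD _ _ ?_ ht
  intro h
  apply hs
  simp only [Set.mem_iUnion]
  exact ⟨t, Polynomial.mem_rootSet.2 ⟨hE0, by rw [hE, h]⟩, ht⟩

/-- Each monomial `x ^ i` becomes a monic polynomial of degree `i · v` on the curve, so the strict
maximality of `h · v` rules out cancellation in the top degree. -/
theorem natDegree_curve {m : ℕ} {f : MvPolynomial (Fin m) ℚ} {v : Fin m → ℕ} (hv : ∀ j, v j ≠ 0)
    (q : Fin m → ℚ) {h : Fin m →₀ ℕ} (hh : h ∈ f.support)
    (hmax : ∀ i ∈ f.support, i ≠ h → ∑ j, i j * v j < ∑ j, h j * v j) :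
    aeval (fun j => Polynomial.X ^ v j + Polynomial.C (q j)) f ≠ 0 ∧
    (aeval (fun j => Polynomial.X ^ v j + Polynomial.C (q j)) f).natDegree =
      ∑ j, h j * v j := by
  have hmon : ∀ (i : Fin m →₀ ℕ) (j : Fin m),
      ((Polynomial.X ^ v j + Polynomial.C (q j)) ^ i j : Polynomial ℚ).Monic := fun i j =>
    (Polynomial.monic_X_pow_add_C _ (hv j)).pow _
  have hmonic : ∀ i : Fin m →₀ ℕ,
      (∏ j, (Polynomial.X ^ v j + Polynomial.C (q j)) ^ i j : Polynomial ℚ).Monic := fun i =>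
    Polynomial.monic_prod_of_monic _ _ fun j _ => hmon i j
  have hdeg : ∀ i : Fin m →₀ ℕ,
      (∏ j, (Polynomial.X ^ v j + Polynomial.C (q j)) ^ i j : Polynomial ℚ).natDegree =
        ∑ j, i j * v j := fun i => by
    rw [Polynomial.natDegree_prod_of_monic _ _ fun j _ => hmon i j]
    refine Finset.sum_congr rfl fun j _ => ?_
    rw [(Polynomial.monic_X_pow_add_C _ (hv j)).natDegree_pow, Polynomial.natDegree_X_pow_add_C]
  have hcoeff : (aeval (fun j => Polynomial.X ^ v j + Polynomial.C (q j)) f).coeff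
      (∑ j, h j * v j) ≠ 0 := by
    rw [aeval_def, eval₂_eq', Polynomial.finsetSum_coeff, Finset.sum_eq_single h]
    · rw [Polynomial.algebraMap_apply, Polynomial.coeff_C_mul, ← hdeg h, (hmonic h).coeff_natDegree]
      simpa using mem_support_iff.1 hh
    · intro i hi hne
      rw [Polynomial.algebraMap_apply, Polynomial.coeff_C_mul,
        Polynomial.coeff_eq_zero_of_natDegree_lt (by rw [hdeg]; exact hmax i hi hne), mul_zero]
    · intro h'; exact absurd hh h'
  refine ⟨fun h0 => hcoeff (by rw [h0, Polynomial.coeff_zero]),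
    Polynomial.natDegree_eq_of_le_of_coeff_ne_zero ?_ hcoeff⟩
  rw [aeval_def, eval₂_eq']
  refine Polynomial.natDegree_sum_le_of_forall_le _ _ fun i hi => ?_
  rw [Polynomial.algebraMap_apply]
  refine (Polynomial.natDegree_C_mul_le _ _).trans ?_
  rw [hdeg]
  by_cases hne : i = h
  · rw [hne]
  · exact (hmax i hi hne).le

/-! ### Divisibility by the index -/

/-- The degree of any number field `L` containing the coordinates of a nonzero smooth point is a
multiple of the index: the field generated by the ratios of the coordinates lies in `L`, and its
degree belongs to `DSet f`. -/
theorem dvd_of_point {m d : ℕ} {f : MvPolynomial (Fin m) ℚ} (hf : f.IsHomogeneous d) {G : ℕ}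
    (hG : ∀ n ∈ DSet f, G ∣ n) {a : Fin m → Qbar} (ha : a ≠ 0) (hfa : aeval a f = 0)
    (hns : ∃ j, aeval a (pderiv j f) ≠ 0) {L : IntermediateField ℚ Qbar}
    [FiniteDimensional ℚ L] (hL : ∀ j, a j ∈ L) : G ∣ Module.finrank ℚ L := by
  obtain ⟨i, hi⟩ := Function.ne_iff.1 ha
  simp only [Pi.zero_apply] at hi
  set K := IntermediateField.adjoin ℚ (Set.range fun j => a j / a i) with hK
  have hKL : K ≤ L := by
    rw [hK, IntermediateField.adjoin_le_iff]
    rintro _ ⟨j, rfl⟩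
    exact div_mem (hL j) (hL i)
  have : FiniteDimensional ℚ K :=
    Module.Finite.of_injective (IntermediateField.inclusion hKL).toLinearMap
      (IntermediateField.inclusion hKL).injective
  refine (hG _ ⟨Module.finrank_pos, K, this, rfl, fun j => (a i)⁻¹ * a j,
    ?_, ?_, ?_, ?_, i, ?_, ?_⟩).trans
    (IntermediateField.finrank_dvd_of_le_right hKL)
  · intro j
    simp only [← div_eq_inv_mul]
    exact IntermediateField.subset_adjoin _ _ ⟨j, rfl⟩
  · intro h
    simpa [hi] using congrFun h i
  · rw [aeval_smul_of_homogeneous hf, hfa, mul_zero]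
  · obtain ⟨j, hj⟩ := hns
    refine ⟨j, ?_⟩
    rw [aeval_smul_of_homogeneous hf.pderiv]
    exact mul_ne_zero (pow_ne_zero _ (inv_ne_zero hi)) hj
  · simp [hi]
  · rw [hK]
    congr 2
    funext j
    field_simp

theorem isIntegral_Qbar (t : Qbar) : IsIntegral ℚ t :=
  ((AlgebraicClosure.isAlgebraic ℚ).isAlgebraic t).isIntegral

theorem dvd_natDegree {G : ℕ} {F : Polynomial ℚ} (hF : F ≠ 0)
    (h : ∀ t : Qbar, Polynomial.aeval t F = 0 →
      G ∣ Module.finrank ℚ (IntermediateField.adjoin ℚ {t})) : G ∣ F.natDegree := by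
  induction F using WfDvdMonoid.induction_on_irreducible with
  | zero => exact absurd rfl hF
  | unit u hu => simp [Polynomial.natDegree_eq_zero_of_isUnit hu]
  | mul a p ha hp ih =>
    rw [Polynomial.natDegree_mul hp.ne_zero ha]
    refine dvd_add ?_ (ih ha fun t ht => h t (by rw [map_mul, ht, mul_zero]))
    obtain ⟨t, ht⟩ := IsAlgClosed.exists_aeval_eq_zero Qbar p hp.degree_pos.ne'
    have := h t (by rw [map_mul, ht, zero_mul])
    rw [IntermediateField.adjoin.finrank (isIntegral_Qbar t),
      ← minpoly.eq_of_irreducible hp ht, Polynomial.natDegree_mul_C] at this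
    · exact this
    · simpa using hp.ne_zero

theorem dvd_weight {m d : ℕ} (hm : 3 ≤ m) (hd : 1 ≤ d) {f : MvPolynomial (Fin m) ℚ}
    (hf : f.IsHomogeneous d) (hirr : Irreducible f) {G : ℕ} (hG : ∀ n ∈ DSet f, G ∣ n)
    {v : Fin m → ℕ} (hv : ∀ j, v j ≠ 0) {h : Fin m →₀ ℕ} (hh : h ∈ f.support)
    (hmax : ∀ i ∈ f.support, i ≠ h → ∑ j, i j * v j < ∑ j, h j * v j) :
    G ∣ ∑ j, h j * v j := by
  obtain ⟨q, hq⟩ := exists_curve hm hd hf hirr hv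
  obtain ⟨hF0, hFdeg⟩ := natDegree_curve hv q hh hmax
  rw [← hFdeg]
  refine dvd_natDegree hF0 fun t ht => ?_
  have e := comp_aeval_apply (R := ℚ) (fun j => Polynomial.X ^ v j + Polynomial.C (q j))
      (Polynomial.aeval t : Polynomial ℚ →ₐ[ℚ] Qbar) f
  rw [ht] at e
  obtain ⟨hne, hns⟩ := hq t (by simpa using e.symm)
  have : FiniteDimensional ℚ (IntermediateField.adjoin ℚ {t}) :=
    IntermediateField.adjoin.finiteDimensional (isIntegral_Qbar t)
  refine dvd_of_point hf hG hne (by simpa using e.symm) hns fun j => ?_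
  exact add_mem (pow_mem (IntermediateField.mem_adjoin_simple_self ℚ t) _)
    (by simp)

/-- **Theorem 4 (part of Theorem `thm: C_f and H+`).** `G(C_f)` divides `G(H_f)`,
where `G(H_f)` is the gcd of all coordinates of all corners of the Newton polytope of `f`. -/
theorem stmt3 {m d : ℕ} (hm : 3 ≤ m) (hd : 1 ≤ d)
    (f : MvPolynomial (Fin m) ℤ) (hhom : f.IsHomogeneous d)
    (fQ : MvPolynomial (Fin m) ℚ) (hfQ : fQ = MvPolynomial.map (Int.castRingHom ℚ) f)
    (hirr : Irreducible fQ)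
    (GC GH : ℕ) (hGC : IsGcdOf GC (DSet fQ))
    (hGH : IsGcdOf GH {k | ∃ h : Fin m →₀ ℕ, IsNewtonCorner f h ∧
      Finset.univ.gcd (fun j => h j) = k}) :
    GC ∣ GH := by
  refine hGH.2 GC ?_
  rintro _ ⟨h, ⟨hh, v, hv⟩, rfl⟩
  refine Finset.dvd_gcd fun k _ => ?_
  have hsupp : fQ.support = f.support := by
    rw [hfQ]
    exact support_map_of_injective f (RingHom.injective_int _)
  have hhomQ : fQ.IsHomogeneous d := by
    rw [hfQ]
    exact hhom.map _
  -- The factor `d + 1` makes the gap between `h` and the other exponents exceed `d ≥ i_k`, so that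
  -- adding `e_k` to the weight keeps `h` strictly maximal.
  have hsum : ∀ i ∈ f.support, ∑ j, i j = d := fun i hi => sum_of_mem_support hhom hi
  have e1 : ∀ i ∈ f.support, ∑ j, i j * ((d + 1) * (v j + 1)) =
      (d + 1) * (∑ j, i j * v j + d) := by
    intro i hi
    conv_rhs => rw [← hsum i hi]
    rw [← Finset.sum_add_distrib, hsum i hi, Finset.mul_sum]
    exact Finset.sum_congr rfl fun j _ => by ring
  have e2 : ∀ i ∈ f.support, ∑ j, i j * ((d + 1) * (v j + 1) + if j = k then 1 else 0) =
      (d + 1) * (∑ j, i j * v j + d) + i k := by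
    intro i hi
    rw [← e1 i hi]
    simp [mul_add, Finset.sum_add_distrib]
  have d1 := dvd_weight hm hd hhomQ hirr hGC.1 (v := fun j => (d + 1) * (v j + 1))
    (fun j => by positivity) (h := h) (by rwa [hsupp]) (by
      rw [hsupp]
      intro i hi hne
      rw [e1 i hi, e1 h hh]
      have := hv i hi hne
      gcongr)
  have d2 := dvd_weight hm hd hhomQ hirr hGC.1
    (v := fun j => (d + 1) * (v j + 1) + if j = k then 1 else 0)
    (fun j => by positivity) (h := h) (by rwa [hsupp]) (by
      rw [hsupp]
      intro i hi hne
      rw [e2 i hi, e2 h hh]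
      have := hv i hi hne
      have hik : i k ≤ d := by
        rw [← hsum i hi]
        exact Finset.single_le_sum (f := fun j => i j) (fun _ _ => Nat.zero_le _)
          (Finset.mem_univ k)
      nlinarith)
  rw [e1 h hh] at d1
  rw [e2 h hh] at d2
  exact (Nat.dvd_add_right d1).1 d2
end
end

section
/- Fix m ≥ 1 and set d = 2m. There exists a constant C_m such that for every B ≥ 3, the number of tuples (b, a_0, a_1, …, a_d) of nonzero integers with |b| ≤ B and |a_i| ≤ B for all i, for which the curve b z² = a_d x^d + a_{d−1} x^{d−1} y + ⋯ + a_0 y^d has a point of odd degree, is at most C_m · B^{d+2} / (log B)^{1/(2m)}. In particular, the proportion of such tuples for which the curve b y² = a_d x^d + ⋯ + a_1 x + a_0 has an algebraic point of odd degree tends to 0 as B → ∞. -/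
/-!
The point of the proof is a local obstruction at every prime `p` dividing `b` exactly once. Suppose
`b z² = f(x, y)` has a point over a number field `K` of odd degree. Since `Σ e f = [K : ℚ]` is odd,
some prime `P` of `K` above `p` has odd ramification index and odd residue degree
(`exists_prime_odd`). Scale the point so that `x, y` are `P`-integral and not both divisible by `P`.
If `f` were irreducible modulo `p`, of even degree `D = 2m`, then it would have no zero over a field
of odd degree over `𝔽_p` (`form_ne_zero_of_irreducible`), so `f(x, y)` would be a `P`-unit, whereas
`b w²` has odd valuation at `P`. Thus `f` is not irreducible of degree `D` modulo any such `p`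
(`not_irreducible_of_hasOddDegPoint`).

Counting minimal polynomials of generators of the field with `p^D` elements shows that a proportion
of at least `(1 - 3/p) / D` of the forms modulo `p` are irreducible of degree `D`
(`card_not_irreducible_form_le`). As the product `q` of the primes exactly dividing `b` is at most
`|b| ≤ B`, the Chinese remainder theorem modulo `q` gives, for fixed `b`, at most
`(3B)^(D+1) ∏_{p ∥ b} γ(p)` admissible coefficient vectors, with
`γ(p) = min(1, 1 - (1 - 3/p) / D)` (`card_box_le`).

It remains to bound the sum over `n ≤ B` of the multiplicative function `g(n) = ∏_{p ∥ n} γ(p)`,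
called `oddPointWeight`, by `O(B / (log B)^(1/D))` (`exists_sum_oddPointWeight_le`). Expanding
`log n` as a sum of the von Mangoldt function and using Chebyshev's estimate bounds
`log N · Σ_{n ≤ N} g(n)` by `13 N Σ_{n ≤ N} g(n) / n` (`log_mul_sum_oddPointWeight_le`). The last sum
is at most `e Σ g(n) n^(-s)` with `s = 1 + 1 / log B`, and comparing Euler products bounds this by
a constant times `ζ(s)^(1 - 1/D)`, which is `O((log B)^(1 - 1/D))` (`tsum_oddPointWeight_le`).
-/

noncomputable section

/-- The curve `b z² = Σ_{i=0}^{D} a_i x^i y^{D−i}` has a point of odd degree: there are a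
number field `K` of odd degree over `ℚ` and `u, v, w ∈ K` with `(u,v) ≠ (0,0)` and
`f(u,v) = b w²`. -/
def HasOddDegPoint (D : ℕ) (b : ℤ) (a : Fin (D + 1) → ℤ) : Prop :=
  ∃ K : IntermediateField ℚ Qbar, FiniteDimensional ℚ ↥K ∧ Odd (Module.finrank ℚ ↥K) ∧
    ∃ u v w : ↥K, (u, v) ≠ (0, 0) ∧
      (∑ i : Fin (D + 1), (a i : ↥K) * u ^ (i : ℕ) * v ^ (D - (i : ℕ))) = (b : ↥K) * w ^ 2

open Polynomial NumberField

/-! ### The local obstruction at a prime exactly dividing `b` -/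

/-- The polynomial `Σ a_i X^i`, obtained from the binary form `Σ a_i x^i y^(D-i)` by setting `y = 1`.
Its degree may drop below `D`, so irreducibility of the form is expressed as irreducibility of this
polynomial together with `natDegree = D`. -/
def formPoly {R : Type*} [CommRing R] (D : ℕ) (a : Fin (D + 1) → R) : R[X] :=
  ∑ i : Fin (D + 1), C (a i) * X ^ (i : ℕ)

lemma formPoly_coeff {R : Type*} [CommRing R] {D : ℕ} (a : Fin (D + 1) → R) (i : Fin (D + 1)) :
    (formPoly D a).coeff i = a i := by
  simp only [formPoly, finsetSum_coeff, coeff_C_mul, coeff_X_pow, ← Fin.ext_iff]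
  simp

/-- A nontrivial zero `(x : y)` in `F` of a form irreducible over `𝔽_p` has `y ≠ 0`, and `x / y` has
degree `D` over `𝔽_p`; hence `D` divides `[F : 𝔽_p]`, which is impossible for `D` even and
`[F : 𝔽_p]` odd. -/
lemma form_ne_zero_of_irreducible {p k D : ℕ} [Fact p.Prime] {F : Type*} [Field F]
    [Algebra (ZMod p) F] (hcard : Nat.card F = p ^ k) (hk : Odd k) (hD : Even D)
    (a : Fin (D + 1) → ZMod p) (hirr : Irreducible (formPoly D a))
    (hdeg : (formPoly D a).natDegree = D) {x y : F} (hxy : x ≠ 0 ∨ y ≠ 0) :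
    ∑ i : Fin (D + 1), algebraMap (ZMod p) F (a i) * x ^ (i : ℕ) * y ^ (D - (i : ℕ)) ≠ 0 := by
  intro h
  have hp : p.Prime := Fact.out
  have hfin : Finite F := Nat.finite_of_card_ne_zero (by
    rw [hcard]; exact pow_ne_zero _ hp.ne_zero)
  by_cases hy : y = 0
  · -- only the leading coefficient survives at a point `(x, 0)`
    subst hy
    rw [Finset.sum_eq_single (Fin.last D)] at h
    · have hx : x ≠ 0 := by simpa using hxy
      have hlead : a (Fin.last D) ≠ 0 := by
        have h1 := formPoly_coeff a (Fin.last D)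
        rw [← h1, Fin.val_last]
        intro h2
        apply hirr.ne_zero
        rw [← leadingCoeff_eq_zero, leadingCoeff, hdeg, h2]
      simp [hx, hlead] at h
    · intro i _ hi
      have : D - (i : ℕ) ≠ 0 := by
        have h1 : (i : ℕ) ≠ D := fun h => hi (Fin.ext (by simpa using h))
        omega
      simp [this]
    · simp
  · have hroot : aeval (x / y) (formPoly D a) = 0 := by
      have : aeval (x / y) (formPoly D a) * y ^ D = 0 := by
        rw [← h, formPoly, map_sum, Finset.sum_mul]
        refine Finset.sum_congr rfl fun i _ => ?_
        have hi : y ^ D = y ^ (i : ℕ) * y ^ (D - (i : ℕ)) := by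
          rw [← pow_add]; congr 1; omega
        rw [hi]
        simp only [map_mul, aeval_C, map_pow, aeval_X, div_pow]
        field_simp
      simpa [hy] using this
    have hfd : FiniteDimensional (ZMod p) F := Module.Finite.of_finite
    have hmin : (minpoly (ZMod p) (x / y)).natDegree = D := by
      rw [← minpoly.eq_of_irreducible hirr hroot,
        natDegree_mul_C (inv_ne_zero (leadingCoeff_ne_zero.2 hirr.ne_zero)), hdeg]
    have hfr : Module.finrank (ZMod p) F = k := by
      have := Module.natCard_eq_pow_finrank (K := ZMod p) (V := F)
      rw [hcard, Nat.card_zmod] at this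
      exact (Nat.pow_right_injective hp.two_le this).symm
    have hdvd : D ∣ k := by
      rw [← hmin, ← hfr]
      exact minpoly.degree_dvd (Algebra.IsIntegral.isIntegral _)
    exact (Nat.not_even_iff_odd.2 hk) (hD.trans_dvd hdvd)

open IsDedekindDomain in
/-- In a number field of odd degree, some prime above `p` has odd ramification index and odd residue
degree, because `Σ e f = [K : ℚ]`. -/
lemma exists_prime_odd {K : Type*} [Field K] [NumberField K] (hodd : Odd (Module.finrank ℚ K))
    {p : ℕ} (hp : p.Prime) :
    ∃ v : HeightOneSpectrum (𝓞 K), (p : 𝓞 K) ∈ v.asIdeal ∧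
      Odd (multiplicity v.asIdeal (Ideal.span {(p : 𝓞 K)})) ∧
      ∃ k, Odd k ∧ Nat.card (𝓞 K ⧸ v.asIdeal) = p ^ k := by
  have hpz : Prime (p : ℤ) := Nat.prime_iff_prime_int.mp hp
  set I : Ideal ℤ := Ideal.span {(p : ℤ)} with hI
  have hIp : I.IsPrime := (Ideal.span_singleton_prime hpz.ne_zero).2 hpz
  have hI0 : I ≠ ⊥ := by simpa [hI] using hp.ne_zero
  have hIm : I.IsMaximal := hIp.isMaximal hI0
  have hmap : I.map (algebraMap ℤ (𝓞 K)) = Ideal.span {(p : 𝓞 K)} := by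
    rw [hI, Ideal.map_span]; simp
  have hmap0 : I.map (algebraMap ℤ (𝓞 K)) ≠ ⊥ := by
    rw [hmap]; simpa using hp.ne_zero
  have hsum := Ideal.sum_ramification_inertia_eq_finrank I (𝓞 K)
  rw [RingOfIntegers.rank] at hsum
  rw [← hsum, Finset.odd_sum_iff_odd_card_odd] at hodd
  obtain ⟨q, hq⟩ := Finset.card_pos.1 hodd.pos
  simp only [Finset.mem_filter, Finset.mem_univ, true_and, Nat.odd_mul] at hq
  obtain ⟨he, hf⟩ := hq
  have hqP : q.1.IsPrime := q.2.1
  have hqL : q.1.LiesOver I := q.2.2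
  have hq0 : q.1 ≠ ⊥ :=
    ne_bot_of_le_ne_bot hmap0 (Ideal.map_le_of_le_comap (q.1.over_def I).le)
  have hqM : q.1.IsMaximal := hqP.isMaximal hq0
  refine ⟨⟨q.1, hqP, hq0⟩, ?_, ?_, _, hf, ?_⟩
  · have : (p : ℤ) ∈ q.1.comap (algebraMap ℤ (𝓞 K)) :=
      (q.1.over_def I).le (Ideal.mem_span_singleton_self _)
    simpa using this
  · rw [← hmap, ← Ideal.IsDedekindDomain.ramificationIdx_eq_multiplicity I q.1 hmap0]
    exact he
  · have := Ideal.absNorm_eq_pow_inertiaDeg' q.1 hp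
    rw [Ideal.absNorm_apply, Submodule.cardQuot_apply] at this
    rw [this, ← Ideal.inertiaDeg'_eq_inertiaDeg I q.1]

open IsDedekindDomain in
/-- If `p` exactly divides `b` and `b z² = f(x, y)` has a point of odd degree, then `f` does not
reduce to an irreducible form of degree `D` modulo `p`. At a prime `P` of odd ramification index and
odd residue degree, an irreducible reduction would make `f(x, y)` a `P`-unit at suitably scaled
coordinates, whereas `b w²` has odd `P`-adic valuation. -/
lemma not_irreducible_of_hasOddDegPoint {D : ℕ} (hD : Even D) {b : ℤ} {a : Fin (D + 1) → ℤ}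
    (h : HasOddDegPoint D b a) {p : ℕ} (hp : p.Prime) (hpb : (p : ℤ) ∣ b)
    (hpb2 : ¬ (p : ℤ) ^ 2 ∣ b) :
    ¬ (Irreducible (formPoly D fun i => (a i : ZMod p)) ∧
      (formPoly D fun i => (a i : ZMod p)).natDegree = D) := by
  rintro ⟨hirr, hdeg⟩
  have : Fact p.Prime := ⟨hp⟩
  obtain ⟨K, hfd, hodd, u, v, w, huv, heq⟩ := h
  have : NumberField K := { to_charZero := inferInstance, to_finiteDimensional := hfd }
  obtain ⟨P, hpP, he, k, hk, hcard⟩ := exists_prime_odd hodd hp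
  -- rescaling by `t` multiplies the equation by `t ^ D`, a square: make the coordinates integral
  -- and not both in `P`
  obtain ⟨x, y, w', hxy, heq'⟩ : ∃ (x y : 𝓞 K) (w' : K), (x ∉ P.asIdeal ∨ y ∉ P.asIdeal) ∧
      ∑ i : Fin (D + 1), (a i : K) * (x : K) ^ (i : ℕ) * (y : K) ^ (D - (i : ℕ)) =
        (b : K) * w' ^ 2 := by
    obtain ⟨r, hr⟩ := hD
    have key : ∀ (x y : 𝓞 K) (t : K), (x : K) = t * u → (y : K) = t * v →
        ∑ i : Fin (D + 1), (a i : K) * (x : K) ^ (i : ℕ) * (y : K) ^ (D - (i : ℕ)) =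
        (b : K) * (t ^ r * w) ^ 2 := by
      intro x y t hx hy
      have : (b : K) * (t ^ r * w) ^ 2 = t ^ D * ((b : K) * w ^ 2) := by
        rw [hr, pow_add]; ring
      rw [this, ← heq, Finset.mul_sum]
      refine Finset.sum_congr rfl fun i _ => ?_
      have hi : t ^ D = t ^ (i : ℕ) * t ^ (D - (i : ℕ)) := by
        rw [← pow_add]; congr 1; omega
      rw [hx, hy, hi, mul_pow, mul_pow]; ring
    by_cases hv : v = 0
    · have hu : u ≠ 0 := fun hu => huv (by rw [hu, hv])
      exact ⟨1, 0, _, Or.inl (fun h1 => P.isPrime.ne_top ((Ideal.eq_top_iff_one _).2 h1)),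
        key 1 0 u⁻¹ (by simp [hu]) (by simp [hv])⟩
    · obtain ⟨n, d, hnd | hnd⟩ := P.exists_primeCompl_mul_eq_or_mul_eq (K := K) (u / v)
      · refine ⟨n, d, _, Or.inr d.2, key n d ((d : 𝓞 K) / v) ?_ ?_⟩
        · have h1 : (n : K) = u / v * ((d : 𝓞 K) : K) := hnd.symm
          rw [h1]; ring
        · field_simp
      · by_cases hu : u = 0
        · exact ⟨0, 1, _, Or.inr (fun h1 => P.isPrime.ne_top ((Ideal.eq_top_iff_one _).2 h1)),
            key 0 1 v⁻¹ (by simp [hu]) (by simp [hv])⟩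
        · refine ⟨d, n, _, Or.inl d.2, key d n ((d : 𝓞 K) / u) ?_ ?_⟩
          · field_simp
          · have h1 : ((d : 𝓞 K) : K) = u / v * (n : K) := hnd.symm
            rw [h1]; field_simp
  -- the value of the form is a `P`-unit
  set z : 𝓞 K := ∑ i : Fin (D + 1), (a i : 𝓞 K) * x ^ (i : ℕ) * y ^ (D - (i : ℕ)) with hz
  have hzP : z ∉ P.asIdeal := by
    have hPm : P.asIdeal.IsMaximal := P.isMaximal
    let _ : Field (𝓞 K ⧸ P.asIdeal) := Ideal.Quotient.field P.asIdeal
    have hch : CharP (𝓞 K ⧸ P.asIdeal) p := by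
      rw [CharP.charP_iff_prime_eq_zero hp]
      have := Ideal.Quotient.eq_zero_iff_mem.2 hpP
      simpa using this
    let _ : Algebra (ZMod p) (𝓞 K ⧸ P.asIdeal) := ZMod.algebra _ p
    have hne := form_ne_zero_of_irreducible hcard hk hD _ hirr hdeg
      (x := Ideal.Quotient.mk P.asIdeal x) (y := Ideal.Quotient.mk P.asIdeal y)
      (by simpa [Ideal.Quotient.eq_zero_iff_mem] using hxy)
    intro hzm
    apply hne
    rw [← Ideal.Quotient.eq_zero_iff_mem, hz] at hzm
    simpa using hzm
  have hzv : P.valuation K (z : K) = 1 := P.valuation_eq_one_iff_notMem.2 hzP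
  have hzK : (z : K) = (b : K) * w' ^ 2 := by
    rw [← heq', hz]; simp
  -- `b` has the same valuation as `p`, namely the odd ramification index of `P`
  obtain ⟨b', rfl⟩ := hpb
  have hb' : ¬ (p : ℤ) ∣ b' := fun ⟨c, hc⟩ => hpb2 ⟨c, by rw [hc]; ring⟩
  have hb'P : ((b' : ℤ) : 𝓞 K) ∉ P.asIdeal := by
    intro hm
    obtain ⟨r, s, hrs⟩ := ((Nat.prime_iff_prime_int.1 hp).coprime_iff_not_dvd.2 hb').symm
    apply P.isPrime.ne_top
    rw [Ideal.eq_top_iff_one]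
    have h1 : (1 : 𝓞 K) = (r : 𝓞 K) * (b' : 𝓞 K) + (s : 𝓞 K) * (p : 𝓞 K) := by
      exact_mod_cast congrArg (Int.cast (R := 𝓞 K)) hrs.symm
    rw [h1]
    exact Ideal.add_mem _ (Ideal.mul_mem_left _ _ hm) (Ideal.mul_mem_left _ _ hpP)
  have hbv : P.valuation K ((b' : ℤ) : K) = 1 := by
    have := (P.valuation_eq_one_iff_notMem (K := K)).2 hb'P
    simpa using this
  have hpv : P.valuation K (p : K) =
      WithZero.exp (-(multiplicity P.asIdeal (Ideal.span {(p : 𝓞 K)}) : ℤ)) := by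
    rw [← P.intValuation_eq_exp_neg_multiplicity (by exact_mod_cast hp.ne_zero),
      ← P.valuation_of_algebraMap (K := K)]
    simp
  have hw0 : w' ≠ 0 := by
    rintro rfl
    rw [hzK] at hzv
    simp at hzv
  have hwv : P.valuation K w' ≠ 0 := by simpa using hw0
  have hfin := hzv
  rw [hzK] at hfin
  push_cast at hfin
  rw [map_mul, map_mul, hbv, hpv, mul_one, map_pow, ← WithZero.exp_log hwv, ← WithZero.exp_nsmul,
    ← WithZero.exp_add, ← WithZero.exp_zero, WithZero.exp_inj] at hfin
  obtain ⟨j, hj⟩ := he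
  rw [hj] at hfin
  simp only [nsmul_eq_mul] at hfin
  push_cast at hfin
  omega

/-! ### Counting irreducible forms over `𝔽_p` -/

lemma formPoly_coeff_self {R : Type*} [CommRing R] {D : ℕ} {f : R[X]} (hf : f.natDegree ≤ D) :
    formPoly D (fun i : Fin (D + 1) => f.coeff i) = f := by
  rw [formPoly, Fin.sum_univ_eq_sum_range (fun i => C (f.coeff i) * X ^ i) (D + 1),
    ← as_sum_range_C_mul_X_pow' f (show f.natDegree < D + 1 by omega)]

section Count
variable (p : ℕ) [Fact p.Prime]

lemma pow_eq_self_of_natDegree_minpoly {F : Type*} [Field F] [Finite F] [Algebra (ZMod p) F]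
    (α : F) : α ^ p ^ (minpoly (ZMod p) α).natDegree = α := by
  have hαint : IsIntegral (ZMod p) α := Algebra.IsIntegral.isIntegral α
  let E := IntermediateField.adjoin (ZMod p) {α}
  let _ : Fintype E := Fintype.ofFinite E
  have hE : Fintype.card E = p ^ (minpoly (ZMod p) α).natDegree := by
    rw [← IntermediateField.adjoin.finrank hαint, ← Nat.card_eq_fintype_card,
      Module.natCard_eq_pow_finrank (K := ZMod p) (V := E), Nat.card_zmod]
  have := FiniteField.pow_card (⟨α, IntermediateField.mem_adjoin_simple_self _ α⟩ : E)
  rw [hE] at this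
  exact congrArg Subtype.val this

lemma geom_sum_le_two_mul_pow (e : ℕ) : ∑ k ∈ Finset.range (e + 1), p ^ k ≤ 2 * p ^ e := by
  have hp : 2 ≤ p := (Fact.out : p.Prime).two_le
  induction e with
  | zero => simp
  | succ e ih =>
    rw [Finset.sum_range_succ, pow_succ p e]
    nlinarith [pow_pos (show 0 < p by omega) e]

open Classical in
/-- Few elements of the field with `p^(e+1)` elements fail to generate it over `𝔽_p`: such an element
is a root of `X^(p^k) - X` for some `1 ≤ k ≤ e`. -/
lemma card_not_generator_le (e : ℕ) {F : Type*} [Field F] [Fintype F]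
    [Algebra (ZMod p) F] (hF : Module.finrank (ZMod p) F = e + 1) :
    (Finset.univ.filter fun α : F => ¬ (minpoly (ZMod p) α).natDegree = e + 1).card ≤
      2 * p ^ e := by
  have hp : p.Prime := Fact.out
  have hsub : (Finset.univ.filter fun α : F => ¬ (minpoly (ZMod p) α).natDegree = e + 1) ⊆
      (Finset.Ico 1 (e + 1)).biUnion fun k => (X ^ p ^ k - X : F[X]).roots.toFinset := by
    intro α hα
    simp only [Finset.mem_filter, Finset.mem_univ, true_and] at hα
    have hαint : IsIntegral (ZMod p) α := Algebra.IsIntegral.isIntegral α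
    have hpos := minpoly.natDegree_pos hαint
    have hle : (minpoly (ZMod p) α).natDegree ≤ e + 1 := by
      rw [← hF]; exact minpoly.natDegree_le α
    simp only [Finset.mem_biUnion, Finset.mem_Ico, Multiset.mem_toFinset]
    refine ⟨(minpoly (ZMod p) α).natDegree, ⟨hpos, by omega⟩, ?_⟩
    rw [mem_roots (FiniteField.X_pow_card_pow_sub_X_ne_zero F hpos.ne' hp.one_lt)]
    simp [pow_eq_self_of_natDegree_minpoly]
  calc _ ≤ _ := Finset.card_le_card hsub
    _ ≤ ∑ k ∈ Finset.Ico 1 (e + 1), (X ^ p ^ k - X : F[X]).roots.toFinset.card :=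
      Finset.card_biUnion_le
    _ ≤ ∑ k ∈ Finset.Ico 1 (e + 1), p ^ k := by
      refine Finset.sum_le_sum fun k hk => ?_
      simp only [Finset.mem_Ico] at hk
      refine (Multiset.toFinset_card_le _).trans ((card_roots' _).trans_eq ?_)
      exact FiniteField.X_pow_card_pow_sub_X_natDegree_eq F (by omega) hp.one_lt
    _ ≤ ∑ k ∈ Finset.range (e + 1), p ^ k :=
      Finset.sum_le_sum_of_subset (fun k hk => by simp at hk ⊢; omega)
    _ ≤ _ := geom_sum_le_two_mul_pow p e

open Classical in
/-- A generator `α` of the field with `p^(e+1)` elements and a unit `c` of `𝔽_p` give the irreducible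
form with polynomial `c · minpoly α`, and each form arises from at most `e + 1` pairs, since it
determines `c` and has `α` as a root. -/
lemma card_irreducible_form_ge (e : ℕ) :
    (p ^ (e + 1) - 2 * p ^ e) * (p - 1) ≤ (e + 1) *
      (Finset.univ.filter fun a : Fin (e + 1 + 1) → ZMod p =>
        Irreducible (formPoly (e + 1) a) ∧ (formPoly (e + 1) a).natDegree = e + 1).card := by
  have hp : p.Prime := Fact.out
  let F := GaloisField p (e + 1)
  let _ : Fintype F := Fintype.ofFinite F
  have hF : Module.finrank (ZMod p) F = e + 1 := GaloisField.finrank p (by omega)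
  have hcF : Fintype.card F = p ^ (e + 1) := by
    rw [← Nat.card_eq_fintype_card]; exact GaloisField.card p (e + 1) (by omega)
  have hpoly : ∀ (α : F) (c : (ZMod p)ˣ), (minpoly (ZMod p) α).natDegree = e + 1 →
      formPoly (e + 1) (fun i => (C (c : ZMod p) * minpoly (ZMod p) α).coeff i) =
        C (c : ZMod p) * minpoly (ZMod p) α := by
    intro α c hα
    refine formPoly_coeff_self ?_
    rw [natDegree_C_mul c.ne_zero, hα]
  set G := Finset.univ.filter fun α : F => (minpoly (ZMod p) α).natDegree = e + 1 with hG
  have hGc : p ^ (e + 1) - 2 * p ^ e ≤ G.card := by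
    have h1 := Finset.card_filter_add_card_filter_not (s := (Finset.univ : Finset F))
      (fun α : F => (minpoly (ZMod p) α).natDegree = e + 1)
    have h2 := card_not_generator_le p e hF
    rw [Finset.card_univ, hcF] at h1
    rw [tsub_le_iff_right, ← h1]
    exact Nat.add_le_add_left h2 _
  have hU : (Finset.univ : Finset (ZMod p)ˣ).card = p - 1 := by
    rw [Finset.card_univ, ZMod.card_units]
  calc _ ≤ G.card * (p - 1) := by gcongr
    _ = (G ×ˢ (Finset.univ : Finset (ZMod p)ˣ)).card := by rw [Finset.card_product, hU]
    _ ≤ _ := by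
      refine Finset.card_le_mul_card_image_of_maps_to
        (f := fun x : F × (ZMod p)ˣ => fun i : Fin (e + 1 + 1) =>
          (C (x.2 : ZMod p) * minpoly (ZMod p) x.1).coeff i) ?_ (e + 1) ?_
      · rintro ⟨α, c⟩ hx
        simp only [hG, Finset.mem_product, Finset.mem_filter, Finset.mem_univ, true_and,
          and_true] at hx ⊢
        have hαint : IsIntegral (ZMod p) α := Algebra.IsIntegral.isIntegral α
        rw [hpoly α c hx, natDegree_C_mul c.ne_zero]
        refine ⟨?_, hx⟩
        rw [irreducible_isUnit_mul (isUnit_C.2 c.isUnit)]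
        exact minpoly.irreducible hαint
      · intro a ha
        simp only [Finset.mem_filter, Finset.mem_univ, true_and] at ha
        -- a fibre embeds into the roots of the form
        calc _ ≤ ((formPoly (e + 1) a).map (algebraMap (ZMod p) F)).roots.toFinset.card := by
              refine Finset.card_le_card_of_injOn Prod.fst ?_ ?_
              · rintro ⟨α, c⟩ hx
                simp only [hG, Finset.coe_filter, Finset.mem_product, Finset.mem_filter,
                  Finset.mem_univ, true_and, and_true, Set.mem_ofPred_eq] at hx
                simp only [Finset.mem_coe, Multiset.mem_toFinset]
                rw [mem_roots (Polynomial.map_ne_zero ha.1.ne_zero), IsRoot.def,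
                  eval_map_algebraMap, ← hx.2, hpoly α c hx.1]
                simp
              · rintro ⟨α, c⟩ hx ⟨α', c'⟩ hx' hαα
                simp only [hG, Finset.coe_filter, Finset.mem_product, Finset.mem_filter,
                  Finset.mem_univ, true_and, and_true, Set.mem_ofPred_eq] at hx hx' hαα
                subst hαα
                have hαint : IsIntegral (ZMod p) α := Algebra.IsIntegral.isIntegral α
                have h1 := congrFun (hx.2.trans hx'.2.symm) (Fin.last (e + 1))
                have h2 : (minpoly (ZMod p) α).coeff (e + 1) = 1 := by
                  have := (minpoly.monic hαint).coeff_natDegree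
                  rwa [hx.1] at this
                simp only [coeff_C_mul, Fin.val_last, h2, mul_one] at h1
                rw [Units.ext h1]
          _ ≤ ((formPoly (e + 1) a).map (algebraMap (ZMod p) F)).natDegree :=
              (Multiset.toFinset_card_le _).trans (card_roots' _)
          _ = e + 1 := by rw [natDegree_map, ha.2]

/-- An upper bound, capped at `1`, for the proportion of forms of degree `D` over `𝔽_p` that are not
irreducible of degree `D`. -/
def localFactor (D p : ℕ) : ℝ := min 1 (1 - 1 / (D : ℝ) * (1 - 3 / (p : ℝ)))

open Classical in
lemma card_not_irreducible_form_le {D : ℕ} (hD : 1 ≤ D) :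
    ((Finset.univ.filter fun a : Fin (D + 1) → ZMod p =>
        ¬ (Irreducible (formPoly D a) ∧ (formPoly D a).natDegree = D)).card : ℝ) ≤
      localFactor D p * (p : ℝ) ^ (D + 1) := by
  have hp : p.Prime := Fact.out
  have hp2 : (2 : ℝ) ≤ p := by exact_mod_cast hp.two_le
  obtain ⟨e, rfl⟩ : ∃ e, D = e + 1 := ⟨D - 1, by omega⟩
  have hge := card_irreducible_form_ge p e
  have hadd := Finset.card_filter_add_card_filter_not
    (s := (Finset.univ : Finset (Fin (e + 1 + 1) → ZMod p)))
    (fun a => Irreducible (formPoly (e + 1) a) ∧ (formPoly (e + 1) a).natDegree = e + 1)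
  rw [Finset.card_univ, Fintype.card_fun, ZMod.card, Fintype.card_fin] at hadd
  set g := (Finset.univ.filter fun a : Fin (e + 1 + 1) → ZMod p =>
    Irreducible (formPoly (e + 1) a) ∧ (formPoly (e + 1) a).natDegree = e + 1).card
  set n := (Finset.univ.filter fun a : Fin (e + 1 + 1) → ZMod p =>
    ¬ (Irreducible (formPoly (e + 1) a) ∧ (formPoly (e + 1) a).natDegree = e + 1)).card
  have hadd' : (g : ℝ) + n = (p : ℝ) ^ (e + 1 + 1) := by exact_mod_cast hadd
  have hge' : ((p : ℝ) ^ (e + 1) - 2 * (p : ℝ) ^ e) * (p - 1) ≤ ((e + 1 : ℕ) : ℝ) * g := by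
    have h1 : 2 * p ^ e ≤ p ^ (e + 1) := by
      rw [pow_succ']; exact Nat.mul_le_mul_right _ hp.two_le
    have h2 : (((p ^ (e + 1) - 2 * p ^ e) * (p - 1) : ℕ) : ℝ) ≤ (((e + 1) * g : ℕ) : ℝ) := by
      exact_mod_cast hge
    rw [Nat.cast_mul, Nat.cast_sub h1, Nat.cast_sub hp.one_lt.le] at h2
    push_cast at h2 ⊢
    exact h2
  unfold localFactor
  rcases min_choice (1 : ℝ) (1 - 1 / ((e + 1 : ℕ) : ℝ) * (1 - 3 / p)) with h | h <;> rw [h]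
  · have : (0 : ℝ) ≤ g := by positivity
    linarith
  · have hpe : 0 < (p : ℝ) ^ e := by positivity
    have hkey : 1 / ((e + 1 : ℕ) : ℝ) * (1 - 3 / p) * (p : ℝ) ^ (e + 1 + 1) ≤ g := by
      have e1 : 1 / ((e + 1 : ℕ) : ℝ) * (1 - 3 / p) * (p : ℝ) ^ (e + 1 + 1) =
          ((p : ℝ) ^ 2 - 3 * p) * (p : ℝ) ^ e / ((e + 1 : ℕ) : ℝ) := by
        field_simp
        ring
      rw [e1, div_le_iff₀ (by positivity)]
      have e2 : ((p : ℝ) ^ (e + 1) - 2 * (p : ℝ) ^ e) * (p - 1) =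
        ((p : ℝ) ^ 2 - 3 * p + 2) * (p : ℝ) ^ e := by ring
      nlinarith
    linarith

end Count

/-! ### The mean value of the multiplicative weight -/

/-- The multiplicative function `n ↦ ∏ γ(p)`, the product running over the primes `p` that divide `n`
exactly once. -/
def oddPointWeight (γ : ℕ → ℝ) (n : ℕ) : ℝ :=
  n.factorization.prod fun p k => if k = 1 then γ p else 1

section Weight
variable {γ : ℕ → ℝ}

lemma oddPointWeight_mul {a b : ℕ} (h : a.Coprime b) :
    oddPointWeight γ (a * b) = oddPointWeight γ a * oddPointWeight γ b := by
  unfold oddPointWeight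
  rw [Nat.factorization_mul_of_coprime h]
  exact Finsupp.prod_add_index_of_disjoint (by simpa using h.disjoint_primeFactors) _

lemma oddPointWeight_one : oddPointWeight γ 1 = 1 := by
  simp [oddPointWeight]

lemma oddPointWeight_prime_pow {p : ℕ} (hp : p.Prime) (k : ℕ) :
    oddPointWeight γ (p ^ k) = if k = 1 then γ p else 1 := by
  unfold oddPointWeight
  rw [hp.factorization_pow, Finsupp.prod_single_index (by simp)]

lemma oddPointWeight_nonneg (h0 : ∀ p, 1 / 2 ≤ γ p) (n : ℕ) : 0 ≤ oddPointWeight γ n := by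
  unfold oddPointWeight
  refine Finset.prod_nonneg fun p _ => ?_
  have := h0 p
  dsimp only
  split_ifs <;> linarith

lemma oddPointWeight_le_one (h0 : ∀ p, 1 / 2 ≤ γ p) (h1 : ∀ p, γ p ≤ 1) (n : ℕ) :
    oddPointWeight γ n ≤ 1 := by
  unfold oddPointWeight
  refine Finset.prod_le_one (fun p _ => ?_) (fun p _ => ?_)
  · have := h0 p
    dsimp only
    split_ifs <;> linarith
  · have := h1 p
    dsimp only
    split_ifs <;> linarith

/-- Multiplying by a prime power changes the local weight at a single prime, and the local weights lie
in `[1/2, 1]`. -/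
lemma oddPointWeight_prime_pow_mul_le (h0 : ∀ p, 1 / 2 ≤ γ p) (h1 : ∀ p, γ p ≤ 1) {p : ℕ}
    (hp : p.Prime) (k : ℕ) {n : ℕ} (hn : n ≠ 0) :
    oddPointWeight γ (p ^ k * n) ≤ 2 * oddPointWeight γ n := by
  obtain ⟨e, n', hn', rfl⟩ := Nat.exists_eq_pow_mul_and_not_dvd hn p hp.ne_one
  have hc : ∀ j, (p ^ j).Coprime n' := fun j =>
    Nat.Coprime.pow_left _ ((Nat.Prime.coprime_iff_not_dvd hp).2 hn')
  rw [← mul_assoc, ← pow_add, oddPointWeight_mul (hc _), oddPointWeight_mul (hc _),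
    oddPointWeight_prime_pow hp, oddPointWeight_prime_pow hp]
  have h2 := oddPointWeight_nonneg h0 n'
  have := h0 p
  have := h1 p
  split_ifs <;> nlinarith

open ArithmeticFunction in
/-- Writing `log n = Σ_{d ∣ n} Λ(d)` and using `g(n) ≤ 2 g(n / d)` for prime powers `d`, the left side
is at most `2 Σ g(n) ψ(N / n)`, to which Chebyshev's bound `ψ(x) ≤ 6 x` applies. -/
lemma sum_oddPointWeight_mul_log_le (h0 : ∀ p, 1 / 2 ≤ γ p) (h1 : ∀ p, γ p ≤ 1) (N : ℕ) :
    ∑ n ∈ Finset.Ioc 0 N, oddPointWeight γ n * Real.log n ≤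
      12 * N * ∑ n ∈ Finset.Ioc 0 N, oddPointWeight γ n / n := by
  set G : ArithmeticFunction ℝ := ⟨fun n => if n = 0 then 0 else oddPointWeight γ n, by simp⟩
    with hG
  have hGn : ∀ n, n ≠ 0 → G n = oddPointWeight γ n := fun n hn => by simp [hG, hn]
  have hstep : ∀ n ∈ Finset.Ioc 0 N,
      oddPointWeight γ n * Real.log n ≤ 2 * (G * vonMangoldt) n := by
    intro n hn
    have hn0 : n ≠ 0 := by simp at hn; omega
    rw [← vonMangoldt_sum, ArithmeticFunction.mul_apply, Finset.mul_sum, Finset.mul_sum,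
      ← Nat.sum_divisorsAntidiagonal' (f := fun _ j => oddPointWeight γ n * vonMangoldt j)]
    refine Finset.sum_le_sum fun x hx => ?_
    obtain ⟨hx1, -⟩ := Nat.mem_divisorsAntidiagonal.1 hx
    have hx0 : x.1 ≠ 0 := by rintro h; simp [h] at hx1; omega
    rw [hGn _ hx0]
    by_cases hpp : IsPrimePow x.2
    · obtain ⟨p, k, hp, hk, hpk⟩ := hpp
      have := oddPointWeight_prime_pow_mul_le h0 h1 hp.nat_prime k hx0
      rw [hpk, mul_comm, hx1] at this
      have h3 : 0 ≤ vonMangoldt x.2 := vonMangoldt_nonneg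
      nlinarith
    · rw [vonMangoldt_eq_zero_iff.2 hpp]; simp
  calc _ ≤ ∑ n ∈ Finset.Ioc 0 N, 2 * (G * vonMangoldt) n := Finset.sum_le_sum hstep
    _ = 2 * ∑ n ∈ Finset.Ioc 0 N, G n * ∑ m ∈ Finset.Ioc 0 (N / n), vonMangoldt m := by
      rw [← Finset.mul_sum, sum_Ioc_mul_eq_sum_sum]
    _ ≤ 2 * ∑ n ∈ Finset.Ioc 0 N, 6 * N * (oddPointWeight γ n / n) := by
      refine mul_le_mul_of_nonneg_left (Finset.sum_le_sum fun n hn => ?_) (by norm_num)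
      have hn0 : n ≠ 0 := by simp at hn; omega
      rw [hGn _ hn0]
      have hψ := Chebyshev.psi_le_const_mul_self (x := (N : ℝ) / n) (by positivity)
      rw [Chebyshev.psi, Nat.floor_div_eq_div] at hψ
      have hl4 : Real.log 4 ≤ 2 := by
        rw [show (4 : ℝ) = 2 ^ 2 by norm_num, Real.log_pow]
        have := Real.log_two_lt_d9
        push_cast; linarith
      have hg := oddPointWeight_nonneg h0 n
      calc _ ≤ oddPointWeight γ n * (6 * ((N : ℝ) / n)) := by
            gcongr
            refine hψ.trans ?_
            gcongr
            linarith
        _ = _ := by ring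
    _ = _ := by rw [← Finset.mul_sum]; ring

/-- The mean value of the weight is bounded by its logarithmic mean divided by `log N`. The difference
`log N - log n` is absorbed through `log (N / n) ≤ N / n`. -/
lemma log_mul_sum_oddPointWeight_le (h0 : ∀ p, 1 / 2 ≤ γ p) (h1 : ∀ p, γ p ≤ 1) (N : ℕ) :
    Real.log N * ∑ n ∈ Finset.Ioc 0 N, oddPointWeight γ n ≤
      13 * N * ∑ n ∈ Finset.Ioc 0 N, oddPointWeight γ n / n := by
  have h := sum_oddPointWeight_mul_log_le h0 h1 N
  have h2 : ∑ n ∈ Finset.Ioc 0 N, (Real.log N - Real.log n) * oddPointWeight γ n ≤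
      N * ∑ n ∈ Finset.Ioc 0 N, oddPointWeight γ n / n := by
    rw [Finset.mul_sum]
    refine Finset.sum_le_sum fun n hn => ?_
    simp only [Finset.mem_Ioc] at hn
    have hn0 : (0 : ℝ) < n := by exact_mod_cast hn.1
    have hN0 : (0 : ℝ) < N := by exact_mod_cast (hn.1.trans_le hn.2)
    rw [← Real.log_div hN0.ne' hn0.ne']
    have hl := Real.log_le_sub_one_of_pos (div_pos hN0 hn0)
    have hg := oddPointWeight_nonneg h0 n
    calc _ ≤ (N / n : ℝ) * oddPointWeight γ n := by gcongr; linarith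
      _ = _ := by ring
  simp only [sub_mul, Finset.sum_sub_distrib, ← Finset.mul_sum] at h2
  have h3 : ∑ n ∈ Finset.Ioc 0 N, Real.log n * oddPointWeight γ n =
    ∑ n ∈ Finset.Ioc 0 N, oddPointWeight γ n * Real.log n :=
    Finset.sum_congr rfl fun _ _ => mul_comm _ _
  linarith

/-- The simple pole of `ζ` at `1` bounds `ζ(s)` near `1`; away from `1` monotonicity suffices. -/
lemma exists_tsum_rpow_le : ∃ C : ℝ, 1 ≤ C ∧ ∀ s : ℝ, 1 < s → s ≤ 2 →
    ∑' n : ℕ, 1 / (n : ℝ) ^ s ≤ C / (s - 1) := by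
  have h := tendsto_sub_mul_tsum_nat_rpow.eventually_lt_const (show (1 : ℝ) < 2 by norm_num)
  obtain ⟨u, hu, hu2⟩ := mem_nhdsGT_iff_exists_Ioo_subset.1 h
  have hu1 : (1 : ℝ) < u := hu
  set r := (1 + u) / 2 with hr
  have hr1 : 1 < r := by rw [hr]; linarith
  set Z := ∑' n : ℕ, 1 / (n : ℝ) ^ r with hZ
  have hZ0 : 0 ≤ Z := tsum_nonneg fun n => by positivity
  refine ⟨2 + Z, by linarith, fun s hs hs2 => ?_⟩
  rw [le_div_iff₀ (by linarith), mul_comm]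
  rcases le_or_gt r s with hrs | hrs
  · have : ∑' n : ℕ, 1 / (n : ℝ) ^ s ≤ Z := by
      refine Summable.tsum_le_tsum (fun n => ?_) (Real.summable_one_div_nat_rpow.2 hs)
        (Real.summable_one_div_nat_rpow.2 hr1)
      rcases Nat.eq_zero_or_pos n with rfl | hn
      · simp [Real.zero_rpow (show s ≠ 0 by linarith), Real.zero_rpow (show r ≠ 0 by linarith)]
      · have : (1 : ℝ) ≤ n := by exact_mod_cast hn
        gcongr
    nlinarith
  · have := hu2 ⟨hs, show s < u by linarith⟩
    simp only [Set.mem_ofPred_eq] at this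
    linarith

/-- The Euler factor of `Σ g(n) n^(-s)` at `p`, where `g` is `oddPointWeight γ`, is at most that of
`ζ(s)^(1-c)` up to the factor `exp (5 / p²)`, whose product over all primes converges. -/
lemma tsum_oddPointWeight_prime_pow_le {c : ℝ} (hc : c ≤ 1 / 2)
    (h2 : ∀ p : ℕ, p.Prime → γ p ≤ 1 - c + 3 * c / p) {s : ℝ} (hs : 1 < s) {p : ℕ}
    (hp : p.Prime) :
    ∑' e : ℕ, oddPointWeight γ (p ^ e) / ((p ^ e : ℕ) : ℝ) ^ s ≤
      Real.exp (5 / (p : ℝ) ^ 2) * ((1 - 1 / (p : ℝ) ^ s)⁻¹) ^ (1 - c) := by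
  have hp2 : (2 : ℝ) ≤ p := by exact_mod_cast hp.two_le
  set t : ℝ := 1 / (p : ℝ) ^ s with ht
  have ht0 : 0 < t := by positivity
  have htp : t ≤ 1 / p := by
    rw [ht]
    gcongr
    calc (p : ℝ) = (p : ℝ) ^ (1 : ℝ) := by simp
      _ ≤ _ := by gcongr; linarith
  have hpi : (1 : ℝ) / p ≤ 1 / 2 := by gcongr
  have hterm : ∀ e : ℕ, oddPointWeight γ (p ^ e) / ((p ^ e : ℕ) : ℝ) ^ s =
      (if e = 1 then γ p else 1) * t ^ e := by
    intro e
    rw [oddPointWeight_prime_pow hp, ht]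
    push_cast
    rw [← Real.rpow_natCast_mul (by positivity), mul_comm (e : ℝ),
      Real.rpow_mul_natCast (by positivity)]
    rw [div_pow, one_pow]; ring
  simp_rw [hterm]
  have hsum : HasSum (fun e : ℕ => (if e = 1 then γ p else 1) * t ^ e)
      ((1 - t)⁻¹ + (γ p - 1) * t) := by
    have ha := hasSum_geometric_of_lt_one ht0.le (by linarith : t < 1)
    have hb := hasSum_ite_eq (1 : ℕ) ((γ p - 1) * t)
    convert ha.add hb using 2 with e
    by_cases he : e = 1
    · subst he; simp; ring
    · simp [he]
  rw [hsum.tsum_eq]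
  have hinv : (1 - t)⁻¹ ≤ 1 + t + 2 * t ^ 2 := by
    rw [inv_le_iff_one_le_mul₀ (by linarith)]
    nlinarith [mul_pos ht0 ht0]
  have hγ := h2 p hp
  have hmain : (1 - t)⁻¹ + (γ p - 1) * t ≤ 1 + (5 / (p : ℝ) ^ 2 + (1 - c) * t) := by
    have e1 : (γ p - 1) * t ≤ (3 * c / p - c) * t :=
      mul_le_mul_of_nonneg_right (by linarith) ht0.le
    have e2 : t ^ 2 ≤ (1 / p : ℝ) ^ 2 := by gcongr
    have e3 : 3 * c / p * t ≤ 3 * (1 / 2) / p * (1 / p) := by gcongr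
    have e4 : (5 : ℝ) / (p : ℝ) ^ 2 = 5 * (1 / p : ℝ) ^ 2 := by ring
    have e5 : 3 * (1 / 2) / p * (1 / p) = (3 / 2) * (1 / p : ℝ) ^ 2 := by ring
    have e6 : 0 ≤ (1 / p : ℝ) ^ 2 := by positivity
    rw [e4]
    nlinarith
  calc _ ≤ 1 + (5 / (p : ℝ) ^ 2 + (1 - c) * t) := hmain
    _ ≤ Real.exp (5 / (p : ℝ) ^ 2 + (1 - c) * t) := by
      have := Real.add_one_le_exp (5 / (p : ℝ) ^ 2 + (1 - c) * t); linarith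
    _ = Real.exp (5 / (p : ℝ) ^ 2) * (Real.exp t) ^ (1 - c) := by
      rw [Real.exp_add, ← Real.exp_mul]; ring_nf
    _ ≤ _ := by
      gcongr
      · linarith
      · rw [le_inv_comm₀ (Real.exp_pos _) (by linarith), ← Real.exp_neg]
        have := Real.add_one_le_exp (-t); linarith

/-- Comparison of the Dirichlet series of the weight with `ζ(s)^(1-c)` through Euler products. -/
lemma tsum_oddPointWeight_le {c : ℝ} (hc : c ≤ 1 / 2)
    (h0 : ∀ p, 1 / 2 ≤ γ p) (h1 : ∀ p, γ p ≤ 1)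
    (h2 : ∀ p : ℕ, p.Prime → γ p ≤ 1 - c + 3 * c / p) {s : ℝ} (hs : 1 < s) :
    Summable (fun n : ℕ => oddPointWeight γ n / (n : ℝ) ^ s) ∧
    ∑' n : ℕ, oddPointWeight γ n / (n : ℝ) ^ s ≤
      Real.exp (5 * ∑' n : ℕ, 1 / (n : ℝ) ^ 2) * (∑' n : ℕ, 1 / (n : ℝ) ^ s) ^ (1 - c) := by
  have hs0 : s ≠ 0 := by linarith
  have hsum1 : Summable (fun n : ℕ => 1 / (n : ℝ) ^ s) := Real.summable_one_div_nat_rpow.2 hs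
  have hnn : ∀ n : ℕ, 0 ≤ oddPointWeight γ n / (n : ℝ) ^ s := fun n =>
    div_nonneg (oddPointWeight_nonneg h0 n) (by positivity)
  have hsum : Summable (fun n : ℕ => oddPointWeight γ n / (n : ℝ) ^ s) := by
    refine Summable.of_nonneg_of_le hnn (fun n => ?_) hsum1
    gcongr
    exact oddPointWeight_le_one h0 h1 n
  refine ⟨hsum, ?_⟩
  have hE := EulerProduct.eulerProduct (R := ℝ)
    (f := fun n : ℕ => oddPointWeight γ n / (n : ℝ) ^ s) (by simp [oddPointWeight_one])
    (fun {a b} hab => by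
      simp only [oddPointWeight_mul hab]; push_cast
      rw [Real.mul_rpow (by positivity) (by positivity)]
      exact mul_div_mul_comm _ _ _ _)
    hsum.norm (by simp [Real.zero_rpow hs0])
  refine le_of_tendsto hE (Filter.Eventually.of_forall fun N => ?_)
  set φ : ℕ →* ℝ :=
    { toFun := fun n => 1 / (n : ℝ) ^ s
      map_one' := by simp
      map_mul' := fun a b => by
        push_cast; rw [Real.mul_rpow (by positivity) (by positivity)]; ring } with hφ
  have hZ : ∏ p ∈ N.primesBelow, (1 - 1 / (p : ℝ) ^ s)⁻¹ ≤ ∑' n : ℕ, 1 / (n : ℝ) ^ s := by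
    have := EulerProduct.prod_primesBelow_geometric_eq_tsum_smoothNumbers (f := φ) hsum1 N
    change ∏ p ∈ N.primesBelow, (1 - 1 / (p : ℝ) ^ s)⁻¹ = _ at this
    rw [this]
    exact Summable.tsum_subtype_le (fun n : ℕ => 1 / (n : ℝ) ^ s) _ (fun n => by positivity) hsum1
  have hpos : ∀ p ∈ N.primesBelow, 0 ≤ (1 - 1 / (p : ℝ) ^ s)⁻¹ := by
    intro p hp
    have hp2 : (1 : ℝ) ≤ p := by exact_mod_cast (Nat.prime_of_mem_primesBelow hp).one_lt.le
    have : 1 / (p : ℝ) ^ s ≤ 1 := by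
      rw [div_le_one (by positivity)]
      exact Real.one_le_rpow hp2 (by linarith)
    exact inv_nonneg.2 (by linarith)
  calc _ ≤ ∏ p ∈ N.primesBelow,
        Real.exp (5 / (p : ℝ) ^ 2) * ((1 - 1 / (p : ℝ) ^ s)⁻¹) ^ (1 - c) :=
        Finset.prod_le_prod (fun p _ => tsum_nonneg fun e => hnn _) fun p hp =>
          tsum_oddPointWeight_prime_pow_le hc h2 hs (Nat.prime_of_mem_primesBelow hp)
    _ = Real.exp (5 * ∑ p ∈ N.primesBelow, 1 / (p : ℝ) ^ 2) *
        (∏ p ∈ N.primesBelow, (1 - 1 / (p : ℝ) ^ s)⁻¹) ^ (1 - c) := by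
      rw [Finset.prod_mul_distrib, ← Real.exp_sum, Finset.mul_sum,
        Real.finsetProd_rpow _ _ hpos]
      congr 3
      funext x
      ring
    _ ≤ _ := by
      have hprod := Finset.prod_nonneg hpos
      have hsq : ∑ p ∈ N.primesBelow, 1 / (p : ℝ) ^ 2 ≤ ∑' n : ℕ, 1 / (n : ℝ) ^ 2 :=
        Summable.sum_le_tsum _ (fun n _ => by positivity)
          (Real.summable_one_div_nat_pow.2 (by norm_num))
      refine mul_le_mul (Real.exp_le_exp.2 (by linarith))
        (Real.rpow_le_rpow hprod hZ (by linarith)) (by positivity) (by positivity)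

/-- If `γ(p)` is at most `1 - c + O(1/p)`, the mean value of the weight up to `B` is
`O((log B)^(-c))`. The logarithmic mean is bounded by the Dirichlet series at `s = 1 + 1 / log B`,
where it is `O((log B)^(1-c))`. -/
lemma exists_sum_oddPointWeight_le {c : ℝ} (hc0 : 0 ≤ c) (hc : c ≤ 1 / 2)
    (h0 : ∀ p, 1 / 2 ≤ γ p) (h1 : ∀ p, γ p ≤ 1)
    (h2 : ∀ p : ℕ, p.Prime → γ p ≤ 1 - c + 3 * c / p) :
    ∃ C : ℝ, 0 ≤ C ∧ ∀ B : ℝ, 3 ≤ B → ∑ n ∈ Finset.Ioc 0 ⌊B⌋₊, oddPointWeight γ n ≤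
      C * B / (Real.log B) ^ c := by
  obtain ⟨Z, hZ1, hZ⟩ := exists_tsum_rpow_le
  set A := Real.exp (5 * ∑' n : ℕ, 1 / (n : ℝ) ^ 2) with hA
  have hA0 : 0 ≤ A := (Real.exp_pos _).le
  refine ⟨26 * (Real.exp 1 * (A * Z)), by positivity, fun B hB => ?_⟩
  set N := ⌊B⌋₊ with hN
  have hNB : (N : ℝ) ≤ B := Nat.floor_le (by linarith)
  have hN3 : 3 ≤ N := Nat.le_floor (by exact_mod_cast hB)
  have hN3' : (3 : ℝ) ≤ N := by exact_mod_cast hN3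
  have hlB : 1 ≤ Real.log B := by
    rw [Real.le_log_iff_exp_le (by linarith)]
    have := Real.exp_one_lt_d9; linarith
  have hlN : Real.log B ≤ 2 * Real.log N := by
    rw [← Real.log_rpow (by linarith)]
    apply Real.log_le_log (by linarith)
    have := Nat.lt_floor_add_one B
    rw [← hN] at this
    rw [Real.rpow_two]
    nlinarith
  set s := 1 + 1 / Real.log B with hs
  have hs1 : 1 < s := by
    have : 0 < 1 / Real.log B := by positivity
    rw [hs]; linarith
  have hs2 : s ≤ 2 := by
    have : 1 / Real.log B ≤ 1 := by rw [div_le_one (by linarith)]; exact hlB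
    rw [hs]; linarith
  obtain ⟨hsm, htsum⟩ := tsum_oddPointWeight_le hc h0 h1 h2 hs1
  have hz : ∑' n : ℕ, 1 / (n : ℝ) ^ s ≤ Z * Real.log B := by
    refine (hZ s hs1 hs2).trans_eq ?_
    rw [hs]; simp
  have hlog : ∑ n ∈ Finset.Ioc 0 N, oddPointWeight γ n / n ≤
      Real.exp 1 * (A * (Z * (Real.log B) ^ (1 - c))) := by
    calc _ ≤ ∑ n ∈ Finset.Ioc 0 N, Real.exp 1 * (oddPointWeight γ n / (n : ℝ) ^ s) := by
          refine Finset.sum_le_sum fun n hn => ?_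
          simp only [Finset.mem_Ioc] at hn
          have hn0 : (0 : ℝ) < n := by exact_mod_cast hn.1
          have hnB : (n : ℝ) ≤ B := le_trans (by exact_mod_cast hn.2) hNB
          have hg := oddPointWeight_nonneg h0 n
          -- `n ≤ B` forces `n ^ (1 / log B) ≤ e`
          have : (n : ℝ) ^ s ≤ Real.exp 1 * n := by
            rw [hs, Real.rpow_add hn0, Real.rpow_one, mul_comm]
            gcongr
            rw [Real.rpow_def_of_pos hn0]
            gcongr
            rw [mul_one_div, div_le_one (by linarith)]
            exact Real.log_le_log hn0 hnB
          rw [mul_div_assoc', div_le_div_iff₀ hn0 (by positivity)]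
          nlinarith
      _ = Real.exp 1 * ∑ n ∈ Finset.Ioc 0 N, oddPointWeight γ n / (n : ℝ) ^ s := by
          rw [Finset.mul_sum]
      _ ≤ Real.exp 1 * (A * (∑' n : ℕ, 1 / (n : ℝ) ^ s) ^ (1 - c)) := by
          gcongr
          refine le_trans (Summable.sum_le_tsum _ (fun n _ => ?_) hsm) htsum
          exact div_nonneg (oddPointWeight_nonneg h0 n) (by positivity)
      _ ≤ Real.exp 1 * (A * (Z * Real.log B) ^ (1 - c)) := by
          gcongr
          linarith
      _ ≤ _ := by
          rw [Real.mul_rpow (by linarith) (by linarith)]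
          gcongr
          calc Z ^ (1 - c) ≤ Z ^ (1 : ℝ) := by gcongr; linarith
            _ = Z := by simp
  have hfin := log_mul_sum_oddPointWeight_le h0 h1 N
  set S := ∑ n ∈ Finset.Ioc 0 N, oddPointWeight γ n
  have hS0 : 0 ≤ S := Finset.sum_nonneg fun n _ => oddPointWeight_nonneg h0 n
  have hT0 : 0 ≤ ∑ n ∈ Finset.Ioc 0 N, oddPointWeight γ n / n :=
    Finset.sum_nonneg fun n _ => div_nonneg (oddPointWeight_nonneg h0 n) (by positivity)
  rw [le_div_iff₀ (by positivity)]
  have hrp : Real.log B ^ (1 - c) * Real.log B ^ c = Real.log B := by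
    rw [← Real.rpow_add (by linarith)]; simp
  have hkey : S * Real.log B ≤
      26 * B * (Real.exp 1 * (A * (Z * (Real.log B) ^ (1 - c)))) := by
    calc S * Real.log B ≤ 2 * (Real.log N * S) := by nlinarith
      _ ≤ 2 * (13 * N * ∑ n ∈ Finset.Ioc 0 N, oddPointWeight γ n / n) := by linarith
      _ ≤ 2 * (13 * B * (Real.exp 1 * (A * (Z * (Real.log B) ^ (1 - c))))) := by gcongr
      _ = _ := by ring
  have hpos : 0 < Real.log B ^ (1 - c) := by positivity
  rw [← mul_le_mul_iff_left₀ hpos]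
  calc S * Real.log B ^ c * Real.log B ^ (1 - c) = S * Real.log B := by
        rw [mul_assoc, mul_comm (Real.log B ^ c), hrp]
    _ ≤ _ := hkey
    _ = _ := by ring

end Weight


/-! ### Counting tuples in a box -/

lemma one_half_le_localFactor {D : ℕ} (hD : 2 ≤ D) (p : ℕ) : 1 / 2 ≤ localFactor D p := by
  have hD2 : (2 : ℝ) ≤ (D : ℝ) := by exact_mod_cast hD
  have h1 : 1 / (D : ℝ) ≤ 1 / 2 := by gcongr
  have h2 : 0 ≤ 1 / (D : ℝ) * (3 / (p : ℝ)) := by positivity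
  exact le_min (by norm_num) (by linarith)

lemma localFactor_nonneg {D : ℕ} (hD : 1 ≤ D) (p : ℕ) : 0 ≤ localFactor D p := by
  have hD1 : (1 : ℝ) ≤ (D : ℝ) := by exact_mod_cast hD
  have h1 : 1 / (D : ℝ) ≤ 1 := by rw [div_le_one (by linarith)]; exact hD1
  have h2 : 0 ≤ 1 / (D : ℝ) * (3 / (p : ℝ)) := by positivity
  exact le_min (by norm_num) (by linarith)

open Classical in
/-- Modulo `q = ∏_{p ∈ S} p`, a tuple whose reductions at the primes of `S` are all not irreducible of
degree `D` lies in at most `q^(D+1) ∏ localFactor D p` residue classes, and each class meets the box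
of half-width `N ≥ q` in at most `(3 N / q)^(D+1)` points. -/
lemma card_box_le {S : Finset ℕ} (hS : ∀ p ∈ S, p.Prime) {D : ℕ} (hD : 1 ≤ D) {N : ℕ}
    (hN : ∏ p ∈ S, p ≤ N) :
    (((Fintype.piFinset fun _ : Fin (D + 1) => Finset.Icc (-(N : ℤ)) N).filter fun a =>
      ∀ p ∈ S, ¬ (Irreducible (formPoly D fun i => (a i : ZMod p)) ∧
        (formPoly D fun i => (a i : ZMod p)).natDegree = D)).card : ℝ) ≤
      (3 * (N : ℝ)) ^ (D + 1) * ∏ p ∈ S, localFactor D p := by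
  have hfact : ∀ p : S, Fact (p : ℕ).Prime := fun p => ⟨hS p p.2⟩
  set q := ∏ p ∈ S, p with hq
  have hq0 : 0 < q := Finset.prod_pos fun p hp => (hS p hp).pos
  set T := (Fintype.piFinset fun _ : Fin (D + 1) => Finset.Icc (-(N : ℤ)) N).filter fun a =>
      ∀ p ∈ S, ¬ (Irreducible (formPoly D fun i => (a i : ZMod p)) ∧
        (formPoly D fun i => (a i : ZMod p)).natDegree = D) with hT
  let bad : (p : S) → Finset (Fin (D + 1) → ZMod p) := fun p => Finset.univ.filter fun a =>
    ¬ (Irreducible (formPoly D a) ∧ (formPoly D a).natDegree = D)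
  have hloc : ∀ p : S, ((bad p).card : ℝ) ≤
      localFactor D (p : ℕ) * ((p : ℕ) : ℝ) ^ (D + 1) := fun p => by
    have := card_not_irreducible_form_le (p : ℕ) hD
    simp only [bad]
    convert this
  let red : (Fin (D + 1) → ℤ) → (p : S) → Fin (D + 1) → ZMod p := fun a p i => (a i : ZMod p)
  have hcount : T.card ≤ (2 * N / q + 1) ^ (D + 1) * (Fintype.piFinset bad).card := by
    refine Finset.card_le_mul_card_image_of_maps_to (f := red) ?_ _ ?_
    · intro a ha
      simp only [hT, Finset.mem_filter] at ha
      simp only [Fintype.mem_piFinset, bad, Finset.mem_filter, Finset.mem_univ, true_and]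
      exact fun p => ha.2 p p.2
    · intro r _
      -- two vectors of the fibre agree modulo `q`, so `(z + N) / q` separates their entries
      calc _ ≤ (Fintype.piFinset fun _ : Fin (D + 1) => Finset.range (2 * N / q + 1)).card := by
            refine Finset.card_le_card_of_injOn
              (fun a i => ((a i + N) / (q : ℤ)).toNat) ?_ ?_
            · intro a ha
              simp only [hT, Finset.coe_filter, Finset.mem_filter, Fintype.mem_piFinset,
                Finset.mem_Icc, Set.mem_ofPred_eq] at ha
              simp only [Finset.mem_coe, Fintype.mem_piFinset, Finset.mem_range]
              intro i
              have hi := ha.1.1 i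
              have h1 : (a i + N) / (q : ℤ) ≤ (2 * N : ℤ) / (q : ℤ) :=
                Int.ediv_le_ediv (by exact_mod_cast hq0) (by omega)
              exact Nat.lt_succ_of_le (Int.toNat_le.2 (h1.trans_eq (by push_cast; rfl)))
            · intro a ha a' ha' haa
              simp only [hT, Finset.coe_filter, Finset.mem_filter, Fintype.mem_piFinset,
                Finset.mem_Icc, Set.mem_ofPred_eq] at ha ha'
              funext i
              have hi := ha.1.1 i
              have hi' := ha'.1.1 i
              have hdvd : (q : ℤ) ∣ a i - a' i := by
                rw [hq, Nat.cast_prod]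
                refine Finset.prod_dvd_of_coprime ?_ ?_
                · intro p hp p' hp' hne
                  exact Nat.isCoprime_iff_coprime.2
                    ((Nat.coprime_primes (hS p hp) (hS p' hp')).2 hne)
                · intro p hp
                  have h1 := congrFun (congrFun (ha.2.trans ha'.2.symm) ⟨p, hp⟩) i
                  simp only [red] at h1
                  have h2 := (ZMod.intCast_eq_intCast_iff_dvd_sub _ _ _).1 h1
                  rw [← neg_sub]
                  exact (dvd_neg).2 h2
              have h3 := congrFun haa i
              simp only at h3
              have hpos : ∀ z : ℤ, -(N : ℤ) ≤ z → 0 ≤ (z + N) / (q : ℤ) := fun z hz =>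
                Int.ediv_nonneg (by omega) (by positivity)
              have h4 : (a i + N) / (q : ℤ) = (a' i + N) / (q : ℤ) := by
                have := hpos _ hi.1
                have := hpos _ hi'.1
                omega
              have h5 : (a i + N) % (q : ℤ) = (a' i + N) % (q : ℤ) := by
                refine ((Int.modEq_iff_dvd).2 ?_).symm
                simpa using hdvd
              have h6 := Int.emod_add_mul_ediv (a i + N) q
              have h7 := Int.emod_add_mul_ediv (a' i + N) q
              rw [h4, h5, h7] at h6
              omega
        _ = _ := by simp [Fintype.card_piFinset]
  have hbad : ((Fintype.piFinset bad).card : ℝ) ≤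
      ∏ p ∈ S, (localFactor D p * (p : ℝ) ^ (D + 1)) := by
    calc ((Fintype.piFinset bad).card : ℝ) = ∏ p : S, ((bad p).card : ℝ) := by
          rw [Fintype.card_piFinset, Nat.cast_prod]
      _ ≤ ∏ p : S, (localFactor D (p : ℕ) * ((p : ℕ) : ℝ) ^ (D + 1)) :=
          Finset.prod_le_prod (fun p _ => Nat.cast_nonneg _) fun p _ => hloc p
      _ = _ := Finset.prod_coe_sort S fun p => localFactor D p * (p : ℝ) ^ (D + 1)
  rw [Finset.prod_mul_distrib, Finset.prod_pow, ← Nat.cast_prod, ← hq] at hbad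
  have hlf : 0 ≤ ∏ p ∈ S, localFactor D p :=
    Finset.prod_nonneg fun p _ => localFactor_nonneg hD p
  have hM : (((2 * N / q + 1 : ℕ) : ℝ) * q) ≤ 3 * N := by
    have h1 : (2 * N / q + 1) * q ≤ 3 * N := by
      have := Nat.div_mul_le_self (2 * N) q
      nlinarith
    exact_mod_cast h1
  calc (T.card : ℝ) ≤ ((2 * N / q + 1 : ℕ) : ℝ) ^ (D + 1) * (Fintype.piFinset bad).card := by
        exact_mod_cast hcount
    _ ≤ ((2 * N / q + 1 : ℕ) : ℝ) ^ (D + 1) *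
        ((∏ p ∈ S, localFactor D p) * (q : ℝ) ^ (D + 1)) := by gcongr
    _ = (((2 * N / q + 1 : ℕ) : ℝ) * q) ^ (D + 1) * ∏ p ∈ S, localFactor D p := by
        rw [mul_pow]; ring
    _ ≤ _ := by gcongr

/-- The primes that divide `n` exactly once. -/
def exactPrimes (n : ℕ) : Finset ℕ := n.primeFactors.filter fun p => n.factorization p = 1

lemma oddPointWeight_eq_prod_exactPrimes (γ : ℕ → ℝ) (n : ℕ) :
    oddPointWeight γ n = ∏ p ∈ exactPrimes n, γ p := by
  rw [exactPrimes, Finset.prod_filter]; rfl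

lemma prod_exactPrimes_le {n : ℕ} (hn : n ≠ 0) : ∏ p ∈ exactPrimes n, p ≤ n := by
  refine Nat.le_of_dvd (Nat.pos_of_ne_zero hn) (dvd_trans ?_ (Nat.prod_primeFactors_dvd n))
  exact Finset.prod_dvd_prod_of_subset _ _ _ (Finset.filter_subset _ _)

lemma not_irreducible_of_mem_exactPrimes {D : ℕ} (hD : Even D) {b : ℤ} (hb : b ≠ 0)
    {a : Fin (D + 1) → ℤ} (h : HasOddDegPoint D b a) {p : ℕ} (hp : p ∈ exactPrimes b.natAbs) :
    ¬ (Irreducible (formPoly D fun i => (a i : ZMod p)) ∧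
      (formPoly D fun i => (a i : ZMod p)).natDegree = D) := by
  simp only [exactPrimes, Finset.mem_filter] at hp
  have hpp := Nat.prime_of_mem_primeFactors hp.1
  refine not_irreducible_of_hasOddDegPoint hD h hpp
    (Int.natCast_dvd.2 (Nat.dvd_of_mem_primeFactors hp.1)) fun h2 => ?_
  have h3 : p ^ 2 ∣ b.natAbs := Int.natCast_dvd.1 (by exact_mod_cast h2)
  have := (hpp.pow_dvd_iff_le_factorization (by simpa using hb)).1 h3
  omega

/-- **Theorem 5 (part of Theorem `thm: Hyperelliptic`(a), quantitative form).** The number of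
tuples `(b, a_0, …, a_{2m})` of nonzero integers bounded by `B` for which the curve
`b z² = Σ a_i x^i y^{2m−i}` has a point of odd degree is `≤ C_m B^{2m+2}/(log B)^{1/(2m)}`. -/
theorem stmt4 (m : ℕ) (hm : 1 ≤ m) :
    ∃ Cm : ℝ, ∀ B : ℝ, 3 ≤ B →
      (({p : ℤ × (Fin (2 * m + 1) → ℤ) |
          p.1 ≠ 0 ∧ (∀ i, p.2 i ≠ 0) ∧ |(p.1 : ℝ)| ≤ B ∧ (∀ i, |(p.2 i : ℝ)| ≤ B) ∧
          HasOddDegPoint (2 * m) p.1 p.2}).ncard : ℝ)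
        ≤ Cm * B ^ (2 * m + 2) / (Real.log B) ^ ((1 : ℝ) / (2 * (m : ℝ))) := by
  classical
  set D := 2 * m with hDm
  have hD1 : 1 ≤ D := by omega
  have hD2 : (2 : ℝ) ≤ (D : ℝ) := by exact_mod_cast (show 2 ≤ D by omega)
  have hc : (1 : ℝ) / (2 * (m : ℝ)) = 1 / (D : ℝ) := by rw [hDm]; push_cast; rfl
  rw [hc]
  have hDinv : 1 / (D : ℝ) ≤ 1 / 2 := by gcongr
  obtain ⟨C, hC0, hC⟩ := exists_sum_oddPointWeight_le (γ := localFactor D) (c := 1 / (D : ℝ))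
    (by positivity) hDinv (one_half_le_localFactor (by omega)) (fun p => min_le_left _ _)
    (fun p _ => (min_le_right _ _).trans_eq (by ring))
  refine ⟨2 * 3 ^ (D + 1) * C, fun B hB => ?_⟩
  set N := ⌊B⌋₊ with hN
  have hNB : (N : ℝ) ≤ B := Nat.floor_le (by linarith)
  -- the vectors `a` allowed by the local conditions at `±n`
  let adm : ℕ → Finset (Fin (D + 1) → ℤ) := fun n =>
    (Fintype.piFinset fun _ : Fin (D + 1) => Finset.Icc (-(N : ℤ)) N).filter fun a =>
      ∀ p ∈ exactPrimes n, ¬ (Irreducible (formPoly D fun i => (a i : ZMod p)) ∧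
        (formPoly D fun i => (a i : ZMod p)).natDegree = D)
  let T : Finset (ℤ × (Fin (D + 1) → ℤ)) :=
    (Finset.Ioc 0 N ×ˢ ({1, -1} : Finset ℤ)).biUnion fun s =>
      (adm s.1).image fun a => (s.2 * (s.1 : ℤ), a)
  have habs : ∀ z : ℤ, |(z : ℝ)| ≤ B → z.natAbs ≤ N := fun z hz => by
    apply Nat.le_floor
    rwa [Nat.cast_natAbs, Int.cast_abs]
  have hsub : {p : ℤ × (Fin (D + 1) → ℤ) |
      p.1 ≠ 0 ∧ (∀ i, p.2 i ≠ 0) ∧ |(p.1 : ℝ)| ≤ B ∧ (∀ i, |(p.2 i : ℝ)| ≤ B) ∧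
      HasOddDegPoint D p.1 p.2} ⊆ (T : Set (ℤ × (Fin (D + 1) → ℤ))) := by
    rintro ⟨b, a⟩ ⟨hb0, -, hbB, haB, hpt⟩
    simp only at hb0 hbB haB hpt
    simp only [T, Finset.coe_biUnion, Set.mem_iUnion, Finset.coe_image, Finset.mem_coe]
    refine ⟨(b.natAbs, b.sign), ?_, a, ?_, ?_⟩
    · have := habs b hbB
      simp only [Finset.mem_product, Finset.mem_Ioc, Finset.mem_insert, Finset.mem_singleton]
      refine ⟨by omega, ?_⟩
      rcases lt_or_gt_of_ne hb0 with h | h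
      · exact Or.inr (Int.sign_eq_neg_one_of_neg h)
      · exact Or.inl (Int.sign_eq_one_of_pos h)
    · simp only [adm, Finset.mem_coe, Finset.mem_filter, Fintype.mem_piFinset, Finset.mem_Icc]
      refine ⟨fun i => ?_, fun p hp => ?_⟩
      · have := habs _ (haB i)
        omega
      · exact not_irreducible_of_mem_exactPrimes ⟨m, by omega⟩ hb0 hpt hp
    · simp only [Int.sign_mul_natAbs]
  have hadm : ∀ n ∈ Finset.Ioc 0 N,
      ((adm n).card : ℝ) ≤ (3 * B) ^ (D + 1) * oddPointWeight (localFactor D) n := by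
    intro n hn
    simp only [Finset.mem_Ioc] at hn
    rw [oddPointWeight_eq_prod_exactPrimes]
    refine (card_box_le (fun p hp => Nat.prime_of_mem_primeFactors (Finset.mem_filter.1 hp).1)
      hD1 ((prod_exactPrimes_le (by omega)).trans hn.2)).trans ?_
    exact mul_le_mul_of_nonneg_right (by gcongr)
      (Finset.prod_nonneg fun p _ => localFactor_nonneg hD1 p)
  have hTc : (T.card : ℝ) ≤ 2 * (3 * B) ^ (D + 1) *
      ∑ n ∈ Finset.Ioc 0 N, oddPointWeight (localFactor D) n := by
    have h1 : T.card ≤ ∑ s ∈ Finset.Ioc 0 N ×ˢ ({1, -1} : Finset ℤ), (adm s.1).card :=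
      Finset.card_biUnion_le.trans (Finset.sum_le_sum fun s _ => Finset.card_image_le)
    rw [Finset.sum_product] at h1
    simp only [Finset.sum_const, smul_eq_mul] at h1
    rw [show ({1, -1} : Finset ℤ).card = 2 from rfl] at h1
    calc (T.card : ℝ) ≤ ∑ n ∈ Finset.Ioc 0 N, 2 * ((adm n).card : ℝ) := by exact_mod_cast h1
      _ ≤ ∑ n ∈ Finset.Ioc 0 N,
          2 * ((3 * B) ^ (D + 1) * oddPointWeight (localFactor D) n) :=
        Finset.sum_le_sum fun n hn => by linarith [hadm n hn]
      _ = _ := by rw [Finset.mul_sum]; exact Finset.sum_congr rfl fun _ _ => by ring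
  calc _ ≤ (T.card : ℝ) := by
        rw [← Set.ncard_coe_finset]
        exact_mod_cast Set.ncard_le_ncard hsub T.finite_toSet
    _ ≤ _ := hTc
    _ ≤ 2 * (3 * B) ^ (D + 1) * (C * B / Real.log B ^ (1 / (D : ℝ))) := by
        gcongr
        exact hC B hB
    _ = _ := by rw [mul_pow]; ring
end
end

section
/- (Springer's theorem) Let F(x_1,…,x_m) be a homogeneous quadratic polynomial with rational coefficients. Then there exists a nonzero tuple (a_1,…,a_m) ∈ ℚ^m with F(a_1,…,a_m) = 0 if and only if there exist a number field K with [K:ℚ] odd and a nonzero tuple (b_1,…,b_m) ∈ K^m with F(b_1,…,b_m) = 0. -/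
/-!
The nontrivial direction is Springer's descent, carried out with polynomials in one variable.
A zero of `F` in a number field `K = ℚ(α)` of odd degree amounts to a tuple `g` of polynomials with
`p ∣ F(g)` and not all `gᵢ` divisible by `p`, where `p` is the minimal polynomial of `α`.

The descent is `exists_zero_of_irreducible_dvd`, by induction on `deg p`. After reduction
modulo `p` and division by the gcd, `g` is a primitive tuple of degree `D < deg p`. The
coefficient of `X ^ (2 * D)` in `F(g)` is `F(a)`, where `a ≠ 0` is the tuple of coefficients of `X ^ D`
(`coeff_aeval_of_isHomogeneous`). If `F(a) = 0`, then `a` is the desired zero. Otherwise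
`F(g) = p * h` with `deg h = 2 * D - deg p` odd and smaller than `deg p`, so `h` has an irreducible
factor `q` of smaller odd degree; as `g` is primitive, `q` does not divide all `gᵢ`, and
the induction hypothesis applies to `q`.
-/

noncomputable section

lemma sum_eq_of_isHomogeneous {k : Type*} [Field k] {m n : ℕ} {F : MvPolynomial (Fin m) k}
    (hF : F.IsHomogeneous n) {d : Fin m →₀ ℕ} (hd : d ∈ F.support) : ∑ i, d i = n := by
  rw [← hF (MvPolynomial.mem_support_iff.1 hd), Finsupp.weight_apply, Finsupp.sum_fintype]
  · simp
  · simp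

open Polynomial in
lemma natDegree_prod_pow_le_and_coeff {k ι : Type*} [Field k] (s : Finset ι) (e : ι → ℕ)
    (g : ι → k[X]) (D : ℕ) (hg : ∀ i, (g i).natDegree ≤ D) :
    (∏ i ∈ s, g i ^ e i).natDegree ≤ (∑ i ∈ s, e i) * D ∧
    (∏ i ∈ s, g i ^ e i).coeff ((∑ i ∈ s, e i) * D) = ∏ i ∈ s, (g i).coeff D ^ e i := by
  classical
  induction s using Finset.induction_on with
  | empty => simp
  | insert i s hi ih =>
    rw [Finset.prod_insert hi, Finset.sum_insert hi, Finset.prod_insert hi, add_mul]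
    have h1 : (g i ^ e i).natDegree ≤ e i * D := natDegree_pow_le_of_le _ (hg i)
    refine ⟨natDegree_mul_le_of_le h1 ih.1, ?_⟩
    rw [coeff_mul_add_eq_of_natDegree_le h1 ih.1, ih.2, coeff_pow_of_natDegree_le (hg i)]

open Polynomial in
/-- Substituting polynomials of degree at most `D` into a form of degree `n` gives a polynomial of
degree at most `n * D`, whose coefficient there is the value of the form at the tuple of
coefficients of `X ^ D`. -/
lemma coeff_aeval_of_isHomogeneous {k : Type*} [Field k] {m n : ℕ}
    {F : MvPolynomial (Fin m) k} (hF : F.IsHomogeneous n)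
    (g : Fin m → k[X]) (D : ℕ) (hg : ∀ i, (g i).natDegree ≤ D) :
    (MvPolynomial.aeval g F).natDegree ≤ n * D ∧
    (MvPolynomial.aeval g F).coeff (n * D) = MvPolynomial.eval (fun i => (g i).coeff D) F := by
  have key : ∀ d ∈ F.support, ∑ i, d i = n := fun d hd => sum_eq_of_isHomogeneous hF hd
  rw [MvPolynomial.aeval_def, MvPolynomial.eval₂_eq', MvPolynomial.eval_eq']
  constructor
  · refine natDegree_sum_le_of_forall_le _ _ fun d hd => ?_
    have h := (natDegree_prod_pow_le_and_coeff Finset.univ d g D hg).1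
    rw [key d hd] at h
    exact (natDegree_C_mul_le _ _).trans h
  · rw [finsetSum_coeff]
    refine Finset.sum_congr rfl fun d hd => ?_
    have h := (natDegree_prod_pow_le_and_coeff Finset.univ d g D hg).2
    rw [key d hd] at h
    rw [← h]
    exact coeff_C_mul _

lemma aeval_mul_of_isHomogeneous {k A : Type*} [Field k] [CommRing A] [Algebra k A] {m n : ℕ}
    {F : MvPolynomial (Fin m) k} (hF : F.IsHomogeneous n) (c : A) (g : Fin m → A) :
    MvPolynomial.aeval (fun i => c * g i) F = c ^ n * MvPolynomial.aeval g F := by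
  simp only [MvPolynomial.aeval_def, MvPolynomial.eval₂_eq', Finset.mul_sum]
  refine Finset.sum_congr rfl fun d hd => ?_
  rw [← sum_eq_of_isHomogeneous hF hd]
  simp only [mul_pow, Finset.prod_mul_distrib, Finset.prod_pow_eq_pow_sum]
  ring

open Polynomial in
lemma exists_irreducible_factor_odd {k : Type*} [Field k] (h : k[X])
    (hodd : Odd h.natDegree) : ∃ q, Irreducible q ∧ q ∣ h ∧ Odd q.natDegree := by
  have h0 : h ≠ 0 := by rintro rfl; simp at hodd
  induction h using WfDvdMonoid.induction_on_irreducible with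
  | zero => exact absurd rfl h0
  | unit u hu => rw [natDegree_eq_zero_of_isUnit hu] at hodd; simp at hodd
  | mul a i ha hi ih =>
    by_cases hio : Odd i.natDegree
    · exact ⟨i, hi, dvd_mul_right _ _, hio⟩
    · rw [natDegree_mul hi.ne_zero ha] at hodd
      have : Odd a.natDegree := by
        rw [Nat.not_odd_iff_even] at hio
        exact (Nat.odd_add'.1 hodd).2 hio
      obtain ⟨q, hq, hqa, hqo⟩ := ih this ha
      exact ⟨q, hq, hqa.mul_left _, hqo⟩

open Polynomial in
/-- A quadratic form with a nontrivial zero in `k[X] / (p)`, where `p` is irreducible of odd degree,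
has a nontrivial zero in `k`. -/
lemma exists_zero_of_irreducible_dvd {k : Type*} [Field k] {m : ℕ}
    {F : MvPolynomial (Fin m) k} (hF : F.IsHomogeneous 2) (N : ℕ) :
    ∀ (p : k[X]) (g : Fin m → k[X]), p.natDegree = N → Irreducible p → Odd p.natDegree →
      p ∣ MvPolynomial.aeval g F → (∃ i, ¬ p ∣ g i) →
      ∃ a : Fin m → k, a ≠ 0 ∧ MvPolynomial.eval a F = 0 := by
  classical
  induction N using Nat.strong_induction_on with
  | _ N ih =>
  rintro p g hpN hp hodd hdvd ⟨i₀, hi₀⟩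
  -- The remainders `r` of `g` modulo `p`.
  set r : Fin m → k[X] := fun i => g i % p with hr
  have hr₀ : r i₀ ≠ 0 := fun h => hi₀ ((EuclideanDomain.mod_eq_zero).1 h)
  have hrdeg : ∀ i, (r i).natDegree < p.natDegree := fun i =>
    natDegree_mod_lt _ (by rintro h; rw [h] at hodd; simp at hodd)
  have hrdvd : p ∣ MvPolynomial.aeval r F := by
    rw [← AdjoinRoot.mk_eq_zero] at hdvd ⊢
    have hcomp : ∀ f : Fin m → k[X], AdjoinRoot.mk p (MvPolynomial.aeval f F) =
        MvPolynomial.aeval (fun i => AdjoinRoot.mk p (f i)) F := fun f => by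
      have := MvPolynomial.comp_aeval_apply f (AdjoinRoot.mkₐ p) F
      simpa using this
    rw [hcomp] at hdvd ⊢
    rw [← hdvd]
    congr 2
    ext i
    rw [AdjoinRoot.mk_eq_mk, hr]
    exact ⟨-(g i / p), by linear_combination EuclideanDomain.mod_add_div (g i) p⟩
  let _ : NormalizedGCDMonoid k[X] := Classical.choice inferInstance
  -- The primitive part `f` of `r`.
  obtain ⟨f, hf, hfgcd⟩ := Finset.extract_gcd r (s := Finset.univ) ⟨i₀, Finset.mem_univ _⟩
  set d := Finset.univ.gcd r with hd
  have hrf : r = fun i => d * f i := funext fun i => hf i (Finset.mem_univ _)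
  have hd0 : d ≠ 0 := fun h => hr₀ (by rw [hf i₀ (Finset.mem_univ _), h, zero_mul])
  have hf0 : f i₀ ≠ 0 := fun h => hr₀ (by rw [hf i₀ (Finset.mem_univ _), h, mul_zero])
  have hpd : ¬ p ∣ d := fun h =>
    absurd (natDegree_le_of_dvd (h.trans (Finset.gcd_dvd (Finset.mem_univ i₀))) hr₀)
      (not_le.2 (hrdeg i₀))
  have hfdvd : p ∣ MvPolynomial.aeval f F := by
    rw [hrf, aeval_mul_of_isHomogeneous hF] at hrdvd
    exact (hp.prime.dvd_or_dvd hrdvd).resolve_left fun h => hpd (hp.prime.dvd_of_dvd_pow h)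
  have hfdeg : ∀ i, (f i).natDegree < p.natDegree := by
    intro i
    by_cases hfi : f i = 0
    · rw [hfi, natDegree_zero]; exact hodd.pos
    · have := hrdeg i
      rw [hf i (Finset.mem_univ _), natDegree_mul hd0 hfi] at this
      omega
  -- The index `j` of maximal degree among the nonzero `f i`.
  obtain ⟨j, hj, hjmax⟩ := Finset.exists_max_image (Finset.univ.filter fun i => f i ≠ 0)
    (fun i => (f i).natDegree) ⟨i₀, by simpa using hf0⟩
  have hj0 : f j ≠ 0 := by simpa using hj
  set D := (f j).natDegree with hD
  have hfD : ∀ i, (f i).natDegree ≤ D := by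
    intro i
    by_cases hfi : f i = 0
    · simp [hfi]
    · exact hjmax i (by simpa using hfi)
  obtain ⟨hle, hcoeff⟩ := coeff_aeval_of_isHomogeneous hF f D hfD
  by_cases hzero : MvPolynomial.eval (fun i => (f i).coeff D) F = 0
  · refine ⟨_, fun h => ?_, hzero⟩
    exact hj0 (leadingCoeff_eq_zero.1 (congrFun h j))
  · have hFdeg : (MvPolynomial.aeval f F).natDegree = 2 * D :=
      le_antisymm hle (le_natDegree_of_ne_zero (by rwa [hcoeff]))
    obtain ⟨h, hh⟩ := hfdvd
    have hh0 : h ≠ 0 := by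
      rintro rfl
      rw [hh, mul_zero, coeff_zero] at hcoeff
      exact hzero hcoeff.symm
    have hdeg := hFdeg
    rw [hh, natDegree_mul hp.ne_zero hh0] at hdeg
    have hDlt : D < p.natDegree := hfdeg j
    have hhodd : Odd h.natDegree := by
      obtain ⟨c, hc⟩ := hodd
      exact ⟨D - c - 1, by omega⟩
    obtain ⟨q, hq, hqh, hqodd⟩ := exists_irreducible_factor_odd h hhodd
    have hqle := natDegree_le_of_dvd hqh hh0
    refine ih q.natDegree (by omega) q f rfl hq hqodd (hh ▸ hqh.mul_left p) ?_
    by_contra! hall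
    exact hq.not_isUnit (isUnit_of_dvd_one (hfgcd ▸ Finset.dvd_gcd fun i _ => hall i))

/-- **Springer's theorem.** A homogeneous quadratic over `ℚ` has a nontrivial rational zero
if and only if it has a nontrivial zero in some number field of odd degree. -/
theorem stmt7 {m : ℕ} (F : MvPolynomial (Fin m) ℚ) (hF : F.IsHomogeneous 2) :
    (∃ a : Fin m → ℚ, a ≠ 0 ∧ MvPolynomial.eval a F = 0) ↔
    (∃ K : IntermediateField ℚ Qbar, FiniteDimensional ℚ ↥K ∧ Odd (Module.finrank ℚ ↥K) ∧
      ∃ b : Fin m → ↥K, b ≠ 0 ∧ MvPolynomial.aeval b F = 0) := by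
  constructor
  · rintro ⟨a, ha, hFa⟩
    refine ⟨⊥, inferInstance, by rw [IntermediateField.finrank_bot]; exact odd_one,
      fun i => algebraMap ℚ _ (a i), fun h => ha ?_, ?_⟩
    · ext i
      have := congrFun h i
      simpa using this
    · have := MvPolynomial.aeval_algebraMap_apply (↥(⊥ : IntermediateField ℚ Qbar)) a F
      rw [MvPolynomial.aeval_eq_eval, hFa, map_zero] at this
      exact this
  · rintro ⟨K, hK, hodd, b, hb, hFb⟩
    obtain ⟨α, hα⟩ := Field.exists_primitive_element ℚ K
    have hint : IsIntegral ℚ α := IsIntegral.of_finite ℚ α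
    have hdeg := (Field.primitive_element_iff_minpoly_natDegree_eq ℚ α).1 hα
    have hsurj : ∀ x : K, ∃ f : Polynomial ℚ, Polynomial.aeval α f = x := by
      intro x
      have hx : x ∈ IntermediateField.adjoin ℚ {α} := hα ▸ IntermediateField.mem_top
      rw [← IntermediateField.mem_toSubalgebra,
        IntermediateField.adjoin_simple_toSubalgebra_of_isAlgebraic hint.isAlgebraic,
        Algebra.adjoin_singleton_eq_range_aeval] at hx
      exact hx
    choose g hg using fun i => hsurj (b i)
    obtain ⟨i, hi⟩ := Function.ne_iff.1 hb
    refine exists_zero_of_irreducible_dvd hF _ (minpoly ℚ α) g rfl (minpoly.irreducible hint)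
      (hdeg ▸ hodd) ?_ ⟨i, fun h => hi ?_⟩
    · rw [minpoly.dvd_iff, MvPolynomial.comp_aeval_apply]
      simpa only [hg] using hFb
    · rw [minpoly.dvd_iff, hg] at h
      exact h
end
end

section
/- (Coray) Let F(x_1,…,x_m) be a homogeneous cubic polynomial with rational coefficients. Then there exists a nonzero tuple (a_1,…,a_m) ∈ ℚ^m with F(a_1,…,a_m) = 0 if and only if there exist a number field K with [K:ℚ] = 2 and a nonzero tuple (b_1,…,b_m) ∈ K^m with F(b_1,…,b_m) = 0. -/
/-!
The forward direction is base change to any quadratic field, for instance `ℚ(√2)`.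

Conversely, let `b` be a zero over a quadratic field `K = ℚ ⊕ ℚθ` and write `b = u + θ v` with
`u, v` rational. If `u` and `v` are proportional over `ℚ`, then `b` is a `K`-multiple of a rational
vector, which is itself a zero. Otherwise `u` and `v` span a line in projective space, and the cubic
restricted to it is `f(T) = F(u + T v)`, of degree at most `3` with `T³`-coefficient `F(v)`
(`restrict_degree_coeff`). It vanishes at `θ`, so the quadratic minimal polynomial of `θ` divides
it, and the residual intersection point is rational: it is `u + r v` for a rational root `r` of the
cofactor (linear or zero), or the point `v` at infinity if the cofactor is a nonzero constant.
-/

noncomputable section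

/-- The restriction of `F` to the affine line `u + T v`, as a polynomial in `T`. -/
def restrict {m : ℕ} (F : MvPolynomial (Fin m) ℚ) (u v : Fin m → ℚ) : Polynomial ℚ :=
  MvPolynomial.aeval (fun i => Polynomial.C (u i) + Polynomial.C (v i) * Polynomial.X) F

theorem aeval_restrict {m : ℕ} (F : MvPolynomial (Fin m) ℚ) (u v : Fin m → ℚ)
    {A : Type*} [CommRing A] [Algebra ℚ A] (t : A) :
    Polynomial.aeval t (restrict F u v) =
      MvPolynomial.aeval (fun i => algebraMap ℚ A (u i) + algebraMap ℚ A (v i) * t) F := by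
  unfold restrict
  rw [← AlgHom.comp_apply, MvPolynomial.comp_aeval]
  simp

theorem prod_degree_coeff {m : ℕ} (u v : Fin m → ℚ) (d : Fin m → ℕ) (s : Finset (Fin m)) :
    (∏ i ∈ s, (Polynomial.C (u i) + Polynomial.C (v i) * Polynomial.X) ^ d i).natDegree
        ≤ ∑ i ∈ s, d i ∧
    (∏ i ∈ s, (Polynomial.C (u i) + Polynomial.C (v i) * Polynomial.X) ^ d i).coeff
        (∑ i ∈ s, d i) = ∏ i ∈ s, v i ^ d i := by
  have h1 : ∀ i, (Polynomial.C (u i) + Polynomial.C (v i) * Polynomial.X).natDegree ≤ 1 := by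
    intro i
    compute_degree
  have h2 : ∀ i, ((Polynomial.C (u i) + Polynomial.C (v i) * Polynomial.X) ^ d i).natDegree
      ≤ d i := by
    intro i
    simpa using Polynomial.natDegree_pow_le_of_le (d i) (h1 i)
  induction s using Finset.induction_on with
  | empty => simp
  | insert a s ha ih =>
    rw [Finset.prod_insert ha, Finset.sum_insert ha, Finset.prod_insert ha]
    refine ⟨Polynomial.natDegree_mul_le_of_le (h2 a) ih.1, ?_⟩
    rw [Polynomial.coeff_mul_add_eq_of_natDegree_le (h2 a) ih.1, ih.2]
    have := Polynomial.coeff_pow_of_natDegree_le (m := d a) (h1 a)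
    rw [mul_one] at this
    rw [this]
    simp [Polynomial.coeff_C]

theorem restrict_degree_coeff {m n : ℕ} (F : MvPolynomial (Fin m) ℚ) (hF : F.IsHomogeneous n)
    (u v : Fin m → ℚ) :
    (restrict F u v).natDegree ≤ n ∧ (restrict F u v).coeff n = MvPolynomial.eval v F := by
  have hd : ∀ d ∈ F.support, ∑ i, d i = n := by
    intro d hd
    have := hF (MvPolynomial.mem_support_iff.1 hd)
    rw [← this, Finsupp.weight_apply, Finsupp.sum_fintype] <;> simp
  unfold restrict
  rw [MvPolynomial.aeval_def, MvPolynomial.eval₂_eq', MvPolynomial.eval_eq']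
  constructor
  · refine Polynomial.natDegree_sum_le_of_forall_le _ _ fun d hdF => ?_
    have := (prod_degree_coeff u v d Finset.univ).1
    rw [hd d hdF] at this
    exact (Polynomial.natDegree_C_mul_le _ _).trans this
  · rw [Polynomial.finsetSum_coeff]
    refine Finset.sum_congr rfl fun d hdF => ?_
    have := (prod_degree_coeff u v d Finset.univ).2
    rw [hd d hdF] at this
    rw [Polynomial.algebraMap_eq, Polynomial.coeff_C_mul, this]

/-- If a cubic vanishes at the quadratic point `u + θ v` with `u, v` independent over `ℚ`, the
rational line through `u` and `v` contains a rational zero. -/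
theorem rational_zero_of_independent {m : ℕ} (F : MvPolynomial (Fin m) ℚ) (hF : F.IsHomogeneous 3)
    {K : Type*} [Field K] [Algebra ℚ K] (θ : K) (hi : IsIntegral ℚ θ)
    (hθ : (minpoly ℚ θ).natDegree = 2) (u v : Fin m → ℚ)
    (hu : ∀ r : ℚ, u + r • v ≠ 0) (hv : v ≠ 0)
    (h0 : MvPolynomial.aeval (fun i => algebraMap ℚ K (u i) + algebraMap ℚ K (v i) * θ) F = 0) :
    ∃ a : Fin m → ℚ, a ≠ 0 ∧ MvPolynomial.eval a F = 0 := by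
  obtain ⟨hdeg, hcoeff⟩ := restrict_degree_coeff F hF u v
  rw [← aeval_restrict] at h0
  obtain ⟨g, hg⟩ := minpoly.dvd ℚ θ h0
  have hroot : ∀ r : ℚ, (restrict F u v).eval r = 0 →
      ∃ a : Fin m → ℚ, a ≠ 0 ∧ MvPolynomial.eval a F = 0 := by
    intro r hr
    refine ⟨u + r • v, hu r, ?_⟩
    have := aeval_restrict F u v r
    rw [Polynomial.coe_aeval_eq_eval, hr] at this
    rw [← MvPolynomial.coe_aeval_eq_eval, RingHom.coe_coe, this]
    congr 2
    ext i
    simp [mul_comm]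
  by_cases hg0 : g = 0
  · exact hroot 0 (by simp [hg, hg0])
  have hdg : (restrict F u v).natDegree = 2 + g.natDegree := by
    rw [hg, Polynomial.natDegree_mul (minpoly.ne_zero hi) hg0, hθ]
  by_cases hgd : g.natDegree = 0
  · refine ⟨v, hv, ?_⟩
    rw [← hcoeff]
    exact Polynomial.coeff_eq_zero_of_natDegree_lt (by omega)
  · have h1 : g.degree = 1 := by
      rw [Polynomial.degree_eq_natDegree hg0, show g.natDegree = 1 by omega]
      rfl
    obtain ⟨r, hr⟩ := Polynomial.exists_root_of_degree_eq_one h1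
    exact hroot r (by rw [hg, Polynomial.eval_mul, hr.eq_zero, mul_zero])

theorem aeval_smul_eq {m n : ℕ} (F : MvPolynomial (Fin m) ℚ) (hF : F.IsHomogeneous n)
    {K : Type*} [Field K] [Algebra ℚ K] (c : K) (w : Fin m → ℚ) :
    MvPolynomial.aeval (fun i => c * algebraMap ℚ K (w i)) F =
      c ^ n * algebraMap ℚ K (MvPolynomial.eval w F) := by
  have hd : ∀ d ∈ F.support, ∑ i, d i = n := by
    intro d hd
    have := hF (MvPolynomial.mem_support_iff.1 hd)
    rw [← this, Finsupp.weight_apply, Finsupp.sum_fintype] <;> simp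
  rw [MvPolynomial.aeval_def, MvPolynomial.eval₂_eq', MvPolynomial.eval_eq', map_sum,
    Finset.mul_sum]
  refine Finset.sum_congr rfl fun d hdF => ?_
  simp only [mul_pow, Finset.prod_mul_distrib, Finset.prod_pow_eq_pow_sum, hd d hdF, map_mul,
    map_prod, map_pow]
  ring

/-- A zero proportional over `K` to a rational vector yields a rational zero. -/
theorem rational_zero_of_multiple {m n : ℕ} (F : MvPolynomial (Fin m) ℚ) (hF : F.IsHomogeneous n)
    {K : Type*} [Field K] [Algebra ℚ K] (b : Fin m → K) (hb : b ≠ 0)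
    (h0 : MvPolynomial.aeval b F = 0) (c : K) (w : Fin m → ℚ)
    (hbw : b = fun i => c * algebraMap ℚ K (w i)) :
    ∃ a : Fin m → ℚ, a ≠ 0 ∧ MvPolynomial.eval a F = 0 := by
  have hc : c ≠ 0 := by
    rintro rfl
    exact hb (by rw [hbw]; ext; simp)
  refine ⟨w, ?_, ?_⟩
  · rintro rfl
    exact hb (by rw [hbw]; ext; simp)
  · rw [hbw, aeval_smul_eq F hF] at h0
    exact (map_eq_zero (algebraMap ℚ K)).1
      ((mul_eq_zero.1 h0).resolve_left (pow_ne_zero n hc))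

/-- A quadratic extension of a field `k` of characteristic zero is
`k ⊕ kθ` for some `θ` with minimal polynomial of degree `2`. -/
theorem exists_quadratic_generator (k K : Type*) [Field k] [CharZero k] [Field K] [Algebra k K]
    (h2 : Module.finrank k K = 2) :
    ∃ θ : K, IsIntegral k θ ∧ (minpoly k θ).natDegree = 2 ∧
      ∀ x : K, ∃ p q : k, x = algebraMap k K p + algebraMap k K q * θ := by
  have : FiniteDimensional k K := FiniteDimensional.of_finrank_pos (by omega)
  obtain ⟨θ, hθ⟩ := Field.exists_primitive_element k K
  have hi : IsIntegral k θ := Algebra.IsIntegral.isIntegral θ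
  have hdim : (minpoly k θ).natDegree = 2 := by
    rw [← IntermediateField.adjoin.finrank hi, hθ, IntermediateField.finrank_top', h2]
  refine ⟨θ, hi, hdim, fun x => ?_⟩
  have hx : x ∈ IntermediateField.adjoin k {θ} := by rw [hθ]; trivial
  let pb := IntermediateField.adjoin.powerBasis hi
  obtain ⟨f, hf, hfx⟩ := pb.exists_eq_aeval (y := ⟨x, hx⟩)
  have hf1 : f.natDegree ≤ 1 := by
    have : pb.dim = 2 := by
      rw [← hdim]; rfl
    omega
  refine ⟨f.coeff 0, f.coeff 1, ?_⟩
  have := congrArg (algebraMap (IntermediateField.adjoin k {θ}) K) hfx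
  rw [← Polynomial.aeval_algebraMap_apply] at this
  have hgen : algebraMap (IntermediateField.adjoin k {θ}) K pb.gen = θ := by
    simp [pb]
  rw [hgen, Polynomial.eq_X_add_C_of_natDegree_le_one hf1] at this
  simp only [map_add, map_mul, Polynomial.aeval_C, Polynomial.aeval_X] at this
  rw [add_comm, ← this]
  rfl

theorem exists_quadratic_field :
    ∃ K : IntermediateField ℚ Qbar, FiniteDimensional ℚ ↥K ∧ Module.finrank ℚ ↥K = 2 := by
  obtain ⟨x, hx⟩ := IsAlgClosed.exists_pow_nat_eq (2 : Qbar) (n := 2) (by norm_num)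
  have hm : (Polynomial.X ^ 2 - Polynomial.C (2 : ℚ)).Monic :=
    Polynomial.monic_X_pow_sub_C _ (by norm_num)
  have hirr : Irreducible (Polynomial.X ^ 2 - Polynomial.C (2 : ℚ)) := by
    refine X_pow_sub_C_irreducible_of_prime Nat.prime_two fun b hb => ?_
    have h2 : ((b : ℝ)) ^ 2 = 2 := by exact_mod_cast hb
    apply irrational_sqrt_two
    refine ⟨|b|, ?_⟩
    rw [← h2, Real.sqrt_sq_eq_abs]
    simp
  have hmin : Polynomial.X ^ 2 - Polynomial.C (2 : ℚ) = minpoly ℚ x :=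
    minpoly.eq_of_irreducible_of_monic hirr (by simp [hx]) hm
  have hi : IsIntegral ℚ x := ⟨_, hm, by simp [hx]⟩
  refine ⟨IntermediateField.adjoin ℚ {x}, IntermediateField.adjoin.finiteDimensional hi, ?_⟩
  rw [IntermediateField.adjoin.finrank hi, ← hmin, Polynomial.natDegree_X_pow_sub_C]

/-- **Coray's theorem.** A homogeneous cubic over `ℚ` has a nontrivial rational zero
if and only if it has a nontrivial zero in some number field of degree `2`. -/
theorem stmt8 {m : ℕ} (F : MvPolynomial (Fin m) ℚ) (hF : F.IsHomogeneous 3) :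
    (∃ a : Fin m → ℚ, a ≠ 0 ∧ MvPolynomial.eval a F = 0) ↔
    (∃ K : IntermediateField ℚ Qbar, FiniteDimensional ℚ ↥K ∧ Module.finrank ℚ ↥K = 2 ∧
      ∃ b : Fin m → ↥K, b ≠ 0 ∧ MvPolynomial.aeval b F = 0) := by
  constructor
  · rintro ⟨a, ha, h0⟩
    obtain ⟨K, hfin, h2⟩ := exists_quadratic_field
    refine ⟨K, hfin, h2, fun i => 1 * algebraMap ℚ K (a i), ?_, ?_⟩
    · intro h
      apply ha
      ext i
      simpa using congrFun h i
    · rw [aeval_smul_eq F hF, h0, map_zero, mul_zero]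
  · rintro ⟨K, -, h2, b, hb, h0⟩
    obtain ⟨θ, hi, hθ, hspan⟩ := exists_quadratic_generator ℚ K h2
    choose u v huv using fun i => hspan (b i)
    have hbe : b = fun i => algebraMap ℚ K (u i) + algebraMap ℚ K (v i) * θ := funext huv
    by_cases hv : v = 0
    · exact rational_zero_of_multiple F hF b hb h0 1 u (by rw [hbe]; ext; simp [hv])
    by_cases hu : ∃ r : ℚ, u + r • v = 0
    · obtain ⟨r, hr⟩ := hu
      -- Here `u = -r v`, so `b = (θ - r) v`.
      refine rational_zero_of_multiple F hF b hb h0 (θ - algebraMap ℚ K r) v ?_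
      rw [hbe]
      funext i
      have : u i = -(r * v i) := eq_neg_of_add_eq_zero_left (by simpa using congrFun hr i)
      rw [this, map_neg, map_mul]
      ring
    · rw [hbe] at h0
      exact rational_zero_of_independent F hF θ hi hθ u v (not_exists.1 hu) hv h0
end
end

section
/- Let g ≥ 1 be an integer and let f ∈ ℚ[x] be a polynomial of degree 2g+2 whose leading coefficient is not the square of a rational number. Suppose there exist a number field K with [K:ℚ] odd and α, β ∈ K with β² = f(α). Then there exist a number field L with [L:ℚ] odd and [L:ℚ] ≤ g+1, and α′, β′ ∈ L with β′² = f(α′). (In other words, the least odd degree of an algebraic point on the hyperelliptic curve y² = f(x) is at most g+1.) -/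
/-!
A point of odd degree amounts to an irreducible `p ∈ ℚ[X]` of odd degree together with `h ∈ ℚ[X]`
such that `p ∣ h ^ 2 - f`: the point is `(a, h(a))` with `a` a root of `p`. Indeed, if `K` has odd
degree and `β ^ 2 = f(α)` in `K`, then `β` has degree at most `2` over `ℚ(α)`, and this degree is
odd, so `β ∈ ℚ(α)` (`exists_aeval_eq_of_odd`).

The degree of `p` is then lowered by descent (`descent`). Reduce `h` modulo `p`, so that
`deg h < deg p`. As the leading coefficient of `f` is not a square, the leading terms of `h ^ 2`
and `f` cannot cancel, and `deg (h ^ 2 - f) = 2 * max (deg h) (g + 1)` (`natDegree_sq_sub`). If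
`deg p > g + 1`, this even number is at most `2 * deg p - 2`, so the cofactor `(h ^ 2 - f) / p` has
odd degree at most `deg p - 2`. It therefore has an irreducible factor of odd degree smaller than
`deg p`, which again divides `h ^ 2 - f`.
-/

noncomputable section

open Polynomial IntermediateField

lemma exists_odd_irreducible (q : ℚ[X]) (hq : Odd q.natDegree) :
    ∃ p : ℚ[X], Irreducible p ∧ Odd p.natDegree ∧ p ∣ q := by
  induction hn : q.natDegree using Nat.strong_induction_on generalizing q with
  | _ n ih =>
    have hpos : 0 < q.natDegree := hq.pos
    have hq0 : q ≠ 0 := by rintro rfl; simp at hpos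
    obtain ⟨p, hp, r, rfl⟩ := exists_irreducible_of_natDegree_pos hpos
    by_cases hpo : Odd p.natDegree
    · exact ⟨p, hp, hpo, dvd_mul_right _ _⟩
    · have hr0 : r ≠ 0 := right_ne_zero_of_mul hq0
      have hmul := natDegree_mul hp.ne_zero hr0
      have hppos := hp.natDegree_pos
      have hr : Odd r.natDegree := by
        rw [hmul, Nat.odd_add] at hq
        grind
      obtain ⟨s, hs, hso, hsr⟩ := ih r.natDegree (by omega) r hr rfl
      exact ⟨s, hs, hso, hsr.trans (dvd_mul_left _ _)⟩

/-- The leading terms of `h ^ 2` and `f` never cancel, since the leading coefficient of `f` is not a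
square. -/
lemma natDegree_sq_sub {g : ℕ} {f : ℚ[X]} (hdeg : f.natDegree = 2 * g + 2)
    (hlead : ¬ ∃ q : ℚ, f.leadingCoeff = q ^ 2) (h : ℚ[X]) :
    (h ^ 2 - f).natDegree = 2 * max h.natDegree (g + 1) := by
  rcases le_or_gt h.natDegree (g + 1) with hh | hh
  · rw [max_eq_right hh]
    apply natDegree_eq_of_le_of_coeff_ne_zero
    · refine (natDegree_sub_le _ _).trans (max_le ?_ (by omega))
      rw [natDegree_pow]; omega
    · rw [coeff_sub, coeff_pow_of_natDegree_le hh, show 2 * (g + 1) = f.natDegree by omega,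
        coeff_natDegree]
      intro h0
      exact hlead ⟨_, (sub_eq_zero.mp h0).symm⟩
  · rw [max_eq_left hh.le, natDegree_sub_eq_left_of_natDegree_lt] <;> rw [natDegree_pow]
    omega

/-- The descent: as long as `p` has degree greater than `g + 1`, it can be replaced by an odd-degree
irreducible factor of the cofactor of `p` in `(h % p) ^ 2 - f`. -/
lemma descent {g : ℕ} {f : ℚ[X]} (hdeg : f.natDegree = 2 * g + 2)
    (hlead : ¬ ∃ q : ℚ, f.leadingCoeff = q ^ 2) (p h : ℚ[X]) (hp : Irreducible p)
    (hodd : Odd p.natDegree) (hdvd : p ∣ h ^ 2 - f) :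
    ∃ p h : ℚ[X], Irreducible p ∧ Odd p.natDegree ∧ p.natDegree ≤ g + 1 ∧ p ∣ h ^ 2 - f := by
  induction hn : p.natDegree using Nat.strong_induction_on generalizing p h with
  | _ n ih =>
    rcases le_or_gt p.natDegree (g + 1) with hle | hlt
    · exact ⟨p, h, hp, hodd, hle, hdvd⟩
    have hr : (h % p).natDegree < p.natDegree :=
      natDegree_mod_lt _ hp.natDegree_pos.ne'
    have hdvd' : p ∣ (h % p) ^ 2 - f := by
      have h1 : p ∣ h - h % p := ⟨h / p, by rw [sub_eq_iff_eq_add, EuclideanDomain.div_add_mod]⟩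
      have h2 : (h % p) ^ 2 - f = (h ^ 2 - f) - (h - h % p) * (h + h % p) := by ring
      rw [h2]
      exact dvd_sub hdvd (h1.mul_right _)
    have hD := natDegree_sq_sub hdeg hlead (h % p)
    obtain ⟨q, hq⟩ := hdvd'
    have hq0 : q ≠ 0 := by
      rintro rfl
      rw [hq, mul_zero, natDegree_zero] at hD
      omega
    rw [hq, natDegree_mul hp.ne_zero hq0] at hD
    -- `hD` now reads `deg p + deg q = 2 * max _ _`, with `deg p` odd.
    have hqodd : Odd q.natDegree := by grind
    obtain ⟨s, hs, hso, hsq⟩ := exists_odd_irreducible q hqodd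
    have hsle := natDegree_le_of_dvd hsq hq0
    exact ih s.natDegree (by omega) s (h % p) hs hso (hq ▸ hsq.trans (dvd_mul_left _ _)) rfl

/-- In an extension of odd degree, a square root of an element of `ℚ(α)` already lies in `ℚ(α)`,
hence is a polynomial in `α`. -/
lemma exists_aeval_eq_of_odd {K : Type*} [Field K] [Algebra ℚ K] [FiniteDimensional ℚ K]
    (hodd : Odd (Module.finrank ℚ K)) {f : ℚ[X]} {α β : K} (hβ : β ^ 2 = aeval α f) :
    ∃ h : ℚ[X], β = aeval α h := by
  have hF : Odd (Module.finrank ℚ⟮α⟯ K) := by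
    rw [← Module.finrank_mul_finrank ℚ ℚ⟮α⟯ K] at hodd
    exact (Nat.odd_mul.mp hodd).2
  have hint : IsIntegral ℚ⟮α⟯ β := .of_finite _ _
  have hdvd : (minpoly ℚ⟮α⟯ β).natDegree ∣ Module.finrank ℚ⟮α⟯ K := minpoly.degree_dvd hint
  have hle : (minpoly ℚ⟮α⟯ β).natDegree ≤ 2 := by
    have hroot : aeval β (X ^ 2 - C (aeval (AdjoinSimple.gen ℚ α) f)) = 0 := by
      have : algebraMap ℚ⟮α⟯ K (aeval (AdjoinSimple.gen ℚ α) f) = aeval α f := by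
        rw [← aeval_algebraMap_apply, AdjoinSimple.algebraMap_gen]
      simp [this, hβ]
    have := natDegree_le_of_dvd (minpoly.dvd _ _ hroot) (X_pow_sub_C_ne_zero two_pos _)
    rwa [natDegree_X_pow_sub_C] at this
  have hpos := minpoly.natDegree_pos hint
  have ho : Odd (minpoly ℚ⟮α⟯ β).natDegree := hF.of_dvd_nat hdvd
  have h1 : (minpoly ℚ⟮α⟯ β).natDegree = 1 := by grind
  obtain ⟨b, hb⟩ := minpoly.natDegree_eq_one_iff.mp h1
  have hmem : β ∈ ℚ⟮α⟯.toSubalgebra := hb ▸ b.2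
  rw [adjoin_simple_toSubalgebra_of_isAlgebraic (Algebra.IsAlgebraic.isAlgebraic α),
    Algebra.adjoin_singleton_eq_range_aeval] at hmem
  obtain ⟨h, hh⟩ := hmem
  exact ⟨h, hh.symm⟩

/-- **Half of Bhargava's conjecture (Proposition `Prop: HyperI`).** If the hyperelliptic curve
`y² = f(x)` (with `deg f = 2g+2` and non-square leading coefficient) has a point in a number
field of odd degree, then it has a point in a number field of odd degree at most `g + 1`. -/
theorem stmt9 (g : ℕ) (hg : 1 ≤ g) (f : Polynomial ℚ) (hdeg : f.natDegree = 2 * g + 2)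
    (hlead : ¬ ∃ q : ℚ, f.leadingCoeff = q ^ 2)
    (h : ∃ K : IntermediateField ℚ Qbar, FiniteDimensional ℚ ↥K ∧
      Odd (Module.finrank ℚ ↥K) ∧ ∃ α β : ↥K, β ^ 2 = Polynomial.aeval α f) :
    ∃ L : IntermediateField ℚ Qbar, FiniteDimensional ℚ ↥L ∧
      Odd (Module.finrank ℚ ↥L) ∧ Module.finrank ℚ ↥L ≤ g + 1 ∧
      ∃ α β : ↥L, β ^ 2 = Polynomial.aeval α f := by
  obtain ⟨K, hfin, hodd, α, β, hβ⟩ := h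
  obtain ⟨r, rfl⟩ := exists_aeval_eq_of_odd hodd hβ
  have hα : IsIntegral ℚ α := .of_finite _ _
  obtain ⟨p, s, hp, hpo, hple, hps⟩ := descent hdeg hlead (minpoly ℚ α) r (minpoly.irreducible hα)
    (hodd.of_dvd_nat (minpoly.degree_dvd hα)) (minpoly.dvd _ _ (by simp [hβ]))
  obtain ⟨a, ha⟩ := IsAlgClosed.exists_aeval_eq_zero Qbar p (degree_pos_of_irreducible hp).ne'
  have haint : IsIntegral ℚ a := IsAlgebraic.isIntegral ⟨p, hp.ne_zero, ha⟩
  have hrank : Module.finrank ℚ ℚ⟮a⟯ = p.natDegree := by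
    rw [adjoin.finrank haint, ← minpoly.eq_of_irreducible hp ha,
      natDegree_mul_C (inv_ne_zero (leadingCoeff_ne_zero.mpr hp.ne_zero))]
  have hgen : aeval (AdjoinSimple.gen ℚ a) p = 0 := by
    apply (algebraMap ℚ⟮a⟯ Qbar).injective
    rw [← aeval_algebraMap_apply, AdjoinSimple.algebraMap_gen, ha, map_zero]
  refine ⟨ℚ⟮a⟯, adjoin.finiteDimensional haint, hrank ▸ hpo, hrank ▸ hple,
    AdjoinSimple.gen ℚ a, aeval (AdjoinSimple.gen ℚ a) s, ?_⟩
  have := aeval_eq_zero_of_dvd_aeval_eq_zero hps hgen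
  simpa [sub_eq_zero] using this
end
end

section
/- Let p be a prime, m ≥ 1 an integer, and f(x,y) ∈ ℤ[x,y] a homogeneous binary form of degree 2m such that the reduction of f(x,1) modulo p is an irreducible polynomial of degree 2m in 𝔽_p[x]. Let d be an integer with p dividing d but p² not dividing d. Then for every number field K with [K:ℚ] odd, there do not exist u, v, w ∈ K with (u,v) ≠ (0,0) and f(u,v) = d·w²; that is, the curve d z² = f(x,y) has no points in fields of odd degree. -/
/-!
The fundamental identity `∑ e n = [K : ℚ]` over the primes above `p` provides, when the degree is
odd, a prime `P` of `K` whose ramification index `e` and residue degree `n` are both odd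
(`exists_odd_prime`). The residue field then contains no root of the irreducible polynomial
`f(x, 1)` mod `p`, whose degree `2m` is even, so `f` has no nontrivial zero over the residue field
(`form_eq_zero_of_odd`). Writing `(u, v) = c (a, b)` with `a`, `b` integral and not both in `P`
(`exists_primitive_pair`), the value `f(a, b)` is a `P`-unit and `f(u, v) = c ^ (2m) f(a, b)` has
even `P`-adic valuation. On the other hand `d w²` is zero or has valuation `e + 2 ord_P(w)`, which
is odd.
-/

noncomputable section

/-- Evaluation of an integral form commutes with ring homomorphisms. The `ℤ`-algebra structures
are arbitrary, since `ℤ[X]` carries the one it has as a polynomial algebra. -/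
theorem map_aeval_pair {A B : Type*} [CommRing A] [CommRing B] [Algebra ℤ A] [Algebra ℤ B]
    (φ : A →+* B) (f : MvPolynomial (Fin 2) ℤ) (a b : A) :
    φ (MvPolynomial.aeval ![a, b] f) = MvPolynomial.aeval ![φ a, φ b] f := by
  rw [MvPolynomial.map_aeval, MvPolynomial.aeval_def, MvPolynomial.coe_eval₂Hom,
    RingHom.ext_int (φ.comp (algebraMap ℤ A)) (algebraMap ℤ B)]
  congr 1
  ext i
  fin_cases i <;> rfl

open MvPolynomial in
theorem aeval_smul_pair {A : Type*} [CommRing A] [Algebra ℤ A] {n : ℕ} {f : MvPolynomial (Fin 2) ℤ}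
    (hf : f.IsHomogeneous n) (c a b : A) :
    aeval ![c * a, c * b] f = c ^ n * aeval ![a, b] f := by
  rw [aeval_def, aeval_def, eval₂_eq', eval₂_eq', Finset.mul_sum]
  refine Finset.sum_congr rfl fun i hi => ?_
  have h := hf (mem_support_iff.mp hi)
  simp [Finsupp.weight_apply, Finsupp.sum_fintype, Fin.sum_univ_two] at h
  simp only [Fin.prod_univ_two, Matrix.cons_val_zero, Matrix.cons_val_one, mul_pow, ← h, pow_add]
  ring

open MvPolynomial in
/-- The coefficient of `X ^ n` in the dehomogenization `f(X, 1)` of a form of degree `n` is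
`f(1, 0)`. -/
theorem coeff_dehomog {n : ℕ} {f : MvPolynomial (Fin 2) ℤ} (hf : f.IsHomogeneous n) :
    (aeval ![Polynomial.X, 1] f : Polynomial ℤ).coeff n = aeval ![(1 : ℤ), 0] f := by
  rw [aeval_def, aeval_def, eval₂_eq', eval₂_eq', Polynomial.finsetSum_coeff]
  refine Finset.sum_congr rfl fun i hi => ?_
  have h := hf (mem_support_iff.mp hi)
  simp [Finsupp.weight_apply, Finsupp.sum_fintype, Fin.sum_univ_two] at h
  simp only [Fin.prod_univ_two, Matrix.cons_val_zero, Matrix.cons_val_one, one_pow, mul_one,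
    Polynomial.coeff_X_pow, algebraMap_int_eq, eq_intCast, Polynomial.coeff_intCast_mul,
    zero_pow_eq]
  congr 1
  simp only [one_mul]
  congr 1
  simp; omega

/-- A form whose dehomogenization stays irreducible of full degree `2m` modulo `p` is anisotropic
over every extension of `𝔽_p` of odd degree: a zero with `b ≠ 0` would generate a subextension of
even degree `2m`, and a zero with `b = 0`, `a ≠ 0` would kill the leading coefficient. -/
theorem form_eq_zero_of_odd {p : ℕ} (hp : p.Prime) {m : ℕ}
    {f : MvPolynomial (Fin 2) ℤ} (hhom : f.IsHomogeneous (2 * m))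
    (hirr : Irreducible
      ((MvPolynomial.aeval ![Polynomial.X, 1] f : Polynomial ℤ).map (Int.castRingHom (ZMod p))))
    (hdegp : ((MvPolynomial.aeval ![Polynomial.X, 1] f : Polynomial ℤ).map
      (Int.castRingHom (ZMod p))).natDegree = 2 * m)
    {k : Type*} [Field k] {n : ℕ} (hcard : Nat.card k = p ^ n) (hn : Odd n) {a b : k}
    (h0 : MvPolynomial.aeval ![a, b] f = 0) : a = 0 ∧ b = 0 := by
  have : Fact p.Prime := ⟨hp⟩
  have : Finite k := Nat.finite_of_card_ne_zero (by rw [hcard]; exact pow_ne_zero _ hp.ne_zero)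
  have : Fintype k := Fintype.ofFinite k
  have : CharP k p := charP_of_card_eq_prime_pow (by rw [← Nat.card_eq_fintype_card, hcard])
  let := ZMod.algebra k p
  set F : Polynomial ℤ := MvPolynomial.aeval ![Polynomial.X, 1] f with hF
  have hfin : Module.finrank (ZMod p) k = n := by
    have h := Module.natCard_eq_pow_finrank (K := ZMod p) (V := k)
    rw [hcard, Nat.card_zmod] at h
    exact (Nat.pow_right_injective hp.two_le h).symm
  by_cases hb : b = 0
  · refine ⟨?_, hb⟩
    subst hb
    by_contra ha
    have h1 := aeval_smul_pair hhom a 1 0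
    rw [mul_one, mul_zero, h0, eq_comm, mul_eq_zero, or_iff_right (pow_ne_zero _ ha)] at h1
    have h2 : ((F.coeff (2 * m) : ℤ) : k) = 0 := by
      rw [hF, coeff_dehomog hhom, ← h1, ← eq_intCast (algebraMap ℤ k),
        map_aeval_pair, map_one, map_zero]
    have h3 : (F.map (Int.castRingHom (ZMod p))).coeff (2 * m) = 0 := by
      rw [Polynomial.coeff_map, eq_intCast, ZMod.intCast_zmod_eq_zero_iff_dvd]
      exact (CharP.intCast_eq_zero_iff k p _).mp h2
    rw [← hdegp, Polynomial.coeff_natDegree, Polynomial.leadingCoeff_eq_zero] at h3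
    exact hirr.ne_zero h3
  · exfalso
    have h1 := aeval_smul_pair hhom b (a / b) 1
    rw [mul_one, mul_div_cancel₀ _ hb, h0, eq_comm, mul_eq_zero,
      or_iff_right (pow_ne_zero _ hb)] at h1
    have h2 : Polynomial.aeval (a / b) (F.map (Int.castRingHom (ZMod p))) = 0 := by
      have h := map_aeval_pair
        ((Polynomial.aeval (R := ZMod p) (a / b)).toRingHom.comp
          (Polynomial.mapRingHom (Int.castRingHom (ZMod p)))) f Polynomial.X 1
      rw [← hF] at h
      simp only [RingHom.comp_apply, Polynomial.coe_mapRingHom, AlgHom.toRingHom_eq_coe,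
        RingHom.coe_coe, Polynomial.map_X, Polynomial.aeval_X, map_one] at h
      exact h.trans h1
    have h3 := minpoly.eq_of_irreducible hirr h2
    have h4 := minpoly.degree_dvd (K := ZMod p) (x := a / b) (Algebra.IsIntegral.isIntegral _)
    rw [← h3, Polynomial.natDegree_mul_C (by simpa using hirr.ne_zero), hdegp, hfin] at h4
    have := (even_two_mul m).trans_dvd h4
    exact Nat.not_even_iff_odd.mpr hn this

open IsDedekindDomain NumberField in
/-- In a number field of odd degree, some prime above `p` has odd residue degree `n` and odd
ramification index `e`, because the products `e * n` sum to the degree. -/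
theorem exists_odd_prime {p : ℕ} (hp : p.Prime) (K : Type*) [Field K] [NumberField K]
    (hodd : Odd (Module.finrank ℚ K)) :
    ∃ P : HeightOneSpectrum (𝓞 K), P.asIdeal.LiesOver (Ideal.span {(p : ℤ)}) ∧
      (∃ n, Odd n ∧ Nat.card (𝓞 K ⧸ P.asIdeal) = p ^ n) ∧
      ∃ e : ℕ, Odd e ∧ P.valuation K (p : K) = WithZero.exp (-(e : ℤ)) := by
  have hpZ : Prime (p : ℤ) := Nat.prime_iff_prime_int.mp hp
  have hbot : Ideal.span {(p : ℤ)} ≠ ⊥ := by simpa using hp.ne_zero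
  have : (Ideal.span {(p : ℤ)}).IsPrime := (Ideal.span_singleton_prime hpZ.ne_zero).mpr hpZ
  have : (Ideal.span {(p : ℤ)}).IsMaximal := this.isMaximal hbot
  have : Fintype ((Ideal.span {(p : ℤ)}).primesOver (𝓞 K)) :=
    inferInstance
  have hsum := Ideal.sum_ramification_inertia_eq_finrank (Ideal.span {(p : ℤ)}) (𝓞 K)
  rw [RingOfIntegers.rank] at hsum
  rw [← hsum] at hodd
  obtain ⟨⟨Q, hQ, hQl⟩, hef⟩ : ∃ q : (Ideal.span {(p : ℤ)}).primesOver (𝓞 K),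
      Odd (q.1.ramificationIdx ℤ * q.1.inertiaDeg ℤ) := by
    by_contra! h
    exact Nat.not_even_iff_odd.mpr hodd
      (Finset.even_sum _ fun q _ => Nat.not_odd_iff_even.mp (h q))
  rw [Nat.odd_mul] at hef
  have hQbot : Q ≠ ⊥ := Ideal.ne_bot_of_liesOver_of_ne_bot hbot Q
  have hmax : Q.IsMaximal := hQ.isMaximal hQbot
  refine ⟨⟨Q, hQ, hQbot⟩, hQl, ⟨Q.inertiaDeg ℤ, hef.2, ?_⟩, Q.ramificationIdx ℤ, hef.1, ?_⟩
  · rw [← Ideal.inertiaDeg'_eq_inertiaDeg (Ideal.span {(p : ℤ)}),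
      ← Ideal.absNorm_eq_pow_inertiaDeg' Q hp]
    rfl
  · have hmap : (Ideal.span {(p : ℤ)}).map (algebraMap ℤ (𝓞 K)) = Ideal.span {(p : 𝓞 K)} := by
      rw [Ideal.map_span]; simp
    have hp0 : (p : 𝓞 K) ≠ 0 := by exact_mod_cast hp.ne_zero
    rw [← map_natCast (algebraMap (𝓞 K) K), HeightOneSpectrum.valuation_of_algebraMap,
      HeightOneSpectrum.intValuation_eq_exp_neg_multiplicity _ hp0,
      Ideal.IsDedekindDomain.ramificationIdx_eq_multiplicity (Ideal.span {(p : ℤ)}) Q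
        (by rw [hmap]; simpa using hp0), hmap]

open IsDedekindDomain in
/-- Homogeneous coordinates over the fraction field can be scaled to be integral and not both in
the prime `P`. For `u = v = 0` this holds with `c = 0`. -/
theorem exists_primitive_pair {R : Type*} [CommRing R] [IsDedekindDomain R] {K : Type*} [Field K]
    [Algebra R K] [IsFractionRing R K] (P : HeightOneSpectrum R) (u v : K) :
    ∃ (c : K) (a b : R), u = c * algebraMap R K a ∧ v = c * algebraMap R K b ∧
      ¬ (a ∈ P.asIdeal ∧ b ∈ P.asIdeal) := by
  by_cases hv : v = 0
  · exact ⟨u, 1, 0, by simp, by simp [hv], fun h => P.isPrime.one_notMem h.1⟩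
  · obtain ⟨n, ⟨s, hs⟩, h | h⟩ := P.exists_primeCompl_mul_eq_or_mul_eq (u / v)
    · have hs0 : algebraMap R K s ≠ 0 := by
        simp only [ne_eq, FaithfulSMul.algebraMap_eq_zero_iff]
        rintro rfl
        exact hs P.asIdeal.zero_mem
      refine ⟨v / algebraMap R K s, n, s, ?_, ?_, fun h => hs h.2⟩
      · rw [← h]; field_simp
      · field_simp
    · have hs0 : algebraMap R K s ≠ 0 := by
        simp only [ne_eq, FaithfulSMul.algebraMap_eq_zero_iff]
        rintro rfl
        exact hs P.asIdeal.zero_mem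
      have hn0 : algebraMap R K n ≠ 0 := by
        intro h0
        rw [h0, mul_zero] at h
        exact hs0 h.symm
      refine ⟨v / algebraMap R K n, s, n, ?_, ?_, fun h => hs h.1⟩
      · simp only at h
        rw [← h]; field_simp
      · field_simp

open IsDedekindDomain NumberField in
/-- The statement for an abstract number field `K`. -/
theorem no_odd_points {p : ℕ} (hp : p.Prime) {m : ℕ}
    {f : MvPolynomial (Fin 2) ℤ} (hhom : f.IsHomogeneous (2 * m))
    (hirr : Irreducible
      ((MvPolynomial.aeval ![Polynomial.X, 1] f : Polynomial ℤ).map (Int.castRingHom (ZMod p))))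
    (hdegp : ((MvPolynomial.aeval ![Polynomial.X, 1] f : Polynomial ℤ).map
      (Int.castRingHom (ZMod p))).natDegree = 2 * m)
    {d : ℤ} (hpd : (p : ℤ) ∣ d) (hp2d : ¬ ((p : ℤ) ^ 2 ∣ d))
    {K : Type*} [Field K] [NumberField K] (hodd : Odd (Module.finrank ℚ K)) {u v w : K}
    (huv : (u, v) ≠ (0, 0)) : MvPolynomial.aeval ![u, v] f ≠ (d : K) * w ^ 2 := by
  intro heq
  obtain ⟨P, hPl, ⟨n, hn, hcard⟩, e, he, hval⟩ := exists_odd_prime hp K hodd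
  obtain ⟨c, a, b, rfl, rfl, hab⟩ := exists_primitive_pair P u v
  have hc : c ≠ 0 := by
    rintro rfl
    simp at huv
  have : P.asIdeal.IsMaximal := P.isMaximal
  let := Ideal.Quotient.field P.asIdeal
  -- Reduction modulo `P` turns anisotropy over the residue field into `f(a, b)` being a `P`-unit.
  have hunit : MvPolynomial.aeval ![a, b] f ∉ P.asIdeal := by
    intro hmem
    rw [← Ideal.Quotient.eq_zero_iff_mem, map_aeval_pair] at hmem
    have h := form_eq_zero_of_odd hp hhom hirr hdegp hcard hn hmem
    rw [Ideal.Quotient.eq_zero_iff_mem, Ideal.Quotient.eq_zero_iff_mem] at h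
    exact hab h
  obtain ⟨d', rfl⟩ := hpd
  have hd' : (d' : 𝓞 K) ∉ P.asIdeal := by
    intro hmem
    have h : d' ∈ Ideal.span {(p : ℤ)} := by
      rw [hPl.over, Ideal.mem_comap]
      simpa using hmem
    rw [Ideal.mem_span_singleton] at h
    exact hp2d (by rw [sq]; exact mul_dvd_mul_left _ h)
  have hvd : P.valuation K (d' : K) = 1 := by
    have h := (P.valuation_eq_one_iff_notMem (K := K)).mpr hd'
    rwa [map_intCast] at h
  have hvf := (P.valuation_eq_one_iff_notMem (K := K)).mpr hunit
  rw [aeval_smul_pair hhom, ← map_aeval_pair] at heq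
  have h := congrArg (P.valuation K) heq
  push_cast at h
  rw [map_mul, map_mul, map_mul, map_pow, map_pow, hvf, hvd, hval, mul_one, mul_one] at h
  have hvc : P.valuation K c ≠ 0 := by simpa using hc
  have hvw : P.valuation K w ≠ 0 := by
    intro h0
    rw [h0] at h
    simp [hc] at h
  -- Taking logarithms gives `2m · log |c| = -e + 2 · log |w|` with `e` odd.
  have hlog := congrArg WithZero.log h
  rw [WithZero.log_mul WithZero.exp_ne_zero (pow_ne_zero _ hvw), WithZero.log_pow,
    WithZero.log_pow, WithZero.log_exp] at hlog
  obtain ⟨t, rfl⟩ := he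
  simp only [nsmul_eq_mul] at hlog
  push_cast at hlog
  rw [mul_assoc] at hlog
  omega

/-- **Lemma `lem: no odd points`.** If the binary form `f(x,y) ∈ ℤ[x,y]` of degree `2m` is
irreducible mod `p` and `p ∥ d`, then `d z² = f(x,y)` has no points in fields of odd degree. -/
theorem stmt10 (p : ℕ) (hp : p.Prime) (m : ℕ) (hm : 1 ≤ m)
    (f : MvPolynomial (Fin 2) ℤ) (hhom : f.IsHomogeneous (2 * m))
    (hirr : Irreducible
      ((MvPolynomial.aeval ![Polynomial.X, 1] f : Polynomial ℤ).map (Int.castRingHom (ZMod p))))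
    (hdegp : ((MvPolynomial.aeval ![Polynomial.X, 1] f : Polynomial ℤ).map
      (Int.castRingHom (ZMod p))).natDegree = 2 * m)
    (d : ℤ) (hpd : (p : ℤ) ∣ d) (hp2d : ¬ ((p : ℤ) ^ 2 ∣ d)) :
    ∀ K : IntermediateField ℚ Qbar, FiniteDimensional ℚ ↥K → Odd (Module.finrank ℚ ↥K) →
      ∀ u v w : ↥K, (u, v) ≠ (0, 0) → MvPolynomial.aeval ![u, v] f ≠ (d : ↥K) * w ^ 2 := by
  intro K hK hodd u v w huv
  have : NumberField K := { to_finiteDimensional := hK }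
  exact no_odd_points hp hhom hirr hdegp hpd hp2d hodd huv
end
end
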